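/- Let n ≥ 2 and let q be an odd prime power with q ≠ 3 and q ≠ 9. Let G ≤ Sp(2n; F_q) be the stabilizer subgroup of a fixed nonzero vector of F_q^{2n} under the natural action of the symplectic group. Then the first and second group homology of G with trivial ℤ-coefficients vanish: H₁^gr(G; ℤ) = 0 and H₂^gr(G; ℤ) = 0. -/

import Mathlib

/-!
Call a group superperfect if it is perfect and each of its central extensions splits. Extending `G`
by the two-chains modulo boundaries of the bar complex, with the universal 2-cocycle, shows that a
superperfect group has `H₁ = H₂ = 0` (`SuperPerfect.subsingleton_H2`), so it suffices to prove that
the vector stabilizers are superperfect. No homological algebra is used beyond this.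

The stabilizer of a nonzero vector of a symplectic space `H ⊥ W`, with `H` a hyperbolic plane, is
the semidirect product of a Heisenberg group on `W × K` by `Sp(W)`. In a central extension of it,
`Sp(W)` lifts if it is superperfect, and the lift of `-1 ∈ Sp(W)` singles out good lifts of the
elements of `W`. Their failure to be multiplicative is an `Sp(W)`-invariant biadditive map, which
factors through the symplectic form (`invariant_factor`), and the extension splits
(`superPerfect_stab`). This reduces the theorem to the superperfectness of `Sp(W)`, proved by
induction on the rank.

The base case `Sp₂ = SL₂` (`superPerfect_SL2`) follows Steinberg. The root subgroups lift uniquely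
and equivariantly to any central extension: the commutator pairing on a root subgroup is an
alternating map on `K` invariant under squares, and vanishes unless `q = 3` or `9`
(`alternating_eq_zero`). The resulting Steinberg symbol is trivial, because the torus is cyclic and
some pair of non-squares has sum one; hence the Bruhat decomposition defines a section.

For the induction step (`superPerfect_Sp`), let `E` be a central extension of `Sp(V)` with kernel
`A`. It splits canonically over the stabilizers of nonzero vectors, with image `T v`, and
`E ⧸ T e` is an `A`-covering of the set of nonzero vectors. The lifts `T v` and `T w` agree on
transvections when `v ⊥ w` (`T_tv`) and on the common stabilizer of a hyperbolic pair (`T_pair`).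
By the latter, the relation `B v w = 1` lifts to an `E`-invariant relation `R` on the covering; by
the former, `R` closes up along quadrilaterals (`R.cycle`). Having a common `R`-partner is then a
transitive relation on independent triples (`Φ.trans`), and it generates an `E`-invariant
equivalence relation `Ψ` with exactly one point of each class in each fibre. So the covering is
trivial, and the subgroup of `E` preserving a sheet is a complement of `A`.
-/

namespace BarHomology

variable (G : Type*) [Group G]

/-- Degree-2 differential of the inhomogeneous bar complex with trivial `ℤ`-coefficients. -/
def d2 : FreeAbelianGroup (G × G) →+ FreeAbelianGroup G :=
  FreeAbelianGroup.lift fun p =>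
    FreeAbelianGroup.of p.2 - FreeAbelianGroup.of (p.1 * p.2) + FreeAbelianGroup.of p.1

/-- Degree-3 differential of the inhomogeneous bar complex with trivial `ℤ`-coefficients. -/
def d3 : FreeAbelianGroup (G × G × G) →+ FreeAbelianGroup (G × G) :=
  FreeAbelianGroup.lift fun p =>
    FreeAbelianGroup.of (p.2.1, p.2.2) - FreeAbelianGroup.of (p.1 * p.2.1, p.2.2)
      + FreeAbelianGroup.of (p.1, p.2.1 * p.2.2) - FreeAbelianGroup.of (p.1, p.2.1)

/-- Degree-4 differential of the inhomogeneous bar complex with trivial `ℤ`-coefficients. -/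
def d4 : FreeAbelianGroup (G × G × G × G) →+ FreeAbelianGroup (G × G × G) :=
  FreeAbelianGroup.lift fun p =>
    FreeAbelianGroup.of (p.2.1, p.2.2.1, p.2.2.2)
      - FreeAbelianGroup.of (p.1 * p.2.1, p.2.2.1, p.2.2.2)
      + FreeAbelianGroup.of (p.1, p.2.1 * p.2.2.1, p.2.2.2)
      - FreeAbelianGroup.of (p.1, p.2.1, p.2.2.1 * p.2.2.2)
      + FreeAbelianGroup.of (p.1, p.2.1, p.2.2.1)

/-- First group homology `H₁(G; ℤ)` (bar complex, trivial coefficients). -/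
def H1 := FreeAbelianGroup G ⧸ (d2 G).range

/-- Second group homology `H₂(G; ℤ)` (bar complex, trivial coefficients). -/
def H2 := (d2 G).ker ⧸ ((d3 G).range.addSubgroupOf (d2 G).ker)

/-- Third group homology `H₃(G; ℤ)` (bar complex, trivial coefficients). -/
def H3 := (d3 G).ker ⧸ ((d4 G).range.addSubgroupOf (d3 G).ker)

instance : AddCommGroup (H1 G) := by unfold H1; infer_instance
instance : AddCommGroup (H2 G) := by unfold H2; infer_instance
instance : AddCommGroup (H3 G) := by unfold H3; infer_instance

end BarHomology

open Matrix in
/-- The stabilizer, inside the symplectic group `Sp(2n; K)`, of a fixed vector `v`. -/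
def vecStabilizer (K : Type*) [Field K] (n : ℕ) (v : (Fin n ⊕ Fin n) → K) :
    Subgroup (Matrix.symplecticGroup (Fin n) K) where
  carrier := {A | (A : Matrix (Fin n ⊕ Fin n) (Fin n ⊕ Fin n) K) *ᵥ v = v}
  one_mem' := by simp
  mul_mem' := by
    intro A B hA hB
    show ((A * B : Matrix.symplecticGroup (Fin n) K) :
      Matrix (Fin n ⊕ Fin n) (Fin n ⊕ Fin n) K) *ᵥ v = v
    have : ((A * B : Matrix.symplecticGroup (Fin n) K) :
        Matrix (Fin n ⊕ Fin n) (Fin n ⊕ Fin n) K) =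
      (A : Matrix (Fin n ⊕ Fin n) (Fin n ⊕ Fin n) K) *
        (B : Matrix (Fin n ⊕ Fin n) (Fin n ⊕ Fin n) K) := rfl
    rw [this, ← Matrix.mulVec_mulVec, hB, hA]
  inv_mem' := by
    intro A hA
    show ((A⁻¹ : Matrix.symplecticGroup (Fin n) K) :
      Matrix (Fin n ⊕ Fin n) (Fin n ⊕ Fin n) K) *ᵥ v = v
    conv_lhs => rw [← hA]
    rw [Matrix.mulVec_mulVec]
    have : ((A⁻¹ : Matrix.symplecticGroup (Fin n) K) :
          Matrix (Fin n ⊕ Fin n) (Fin n ⊕ Fin n) K) *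
        (A : Matrix (Fin n ⊕ Fin n) (Fin n ⊕ Fin n) K) =
      ((A⁻¹ * A : Matrix.symplecticGroup (Fin n) K) :
        Matrix (Fin n ⊕ Fin n) (Fin n ⊕ Fin n) K) := rfl
    rw [this, inv_mul_cancel]
    simp

/-! ### Central extensions and superperfect groups -/

namespace SymplecticStabilizer

universe u

open Subgroup

/-- A group is superperfect if it is perfect and every central extension of it (in the same
universe) splits; equivalently, `H₁` and `H₂` with trivial integral coefficients vanish. -/
structure SuperPerfect (G : Type u) [Group G] : Prop where
  perfect : commutator G = ⊤
  split : ∀ (E : Type u) [Group E] (π : E →* G), Function.Surjective π →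
    π.ker ≤ center E → ∃ s : G →* E, ∀ g, π (s g) = g

lemma hom_eq_one_of_mem_commutator {G A : Type*} [Group G] [Group A]
    (hA : ∀ a b : A, a * b = b * a) (f : G →* A) {g : G} (hg : g ∈ commutator G) : f g = 1 := by
  have h : commutator G ≤ f.ker := by
    rw [commutator_def, Subgroup.commutator_le]
    intro a _ b _
    rw [MonoidHom.mem_ker, map_commutatorElement, commutatorElement_eq_one_iff_mul_comm]
    exact hA _ _
  exact h hg

lemma hom_eq_one_of_perfect {G A : Type*} [Group G] [Group A] (hA : ∀ a b : A, a * b = b * a)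
    (hG : commutator G = ⊤) (f : G →* A) (g : G) : f g = 1 :=
  hom_eq_one_of_mem_commutator hA f (hG ▸ mem_top g)

lemma center_mul_comm {E : Type*} [Group E] (a b : center E) : a * b = b * a :=
  Subtype.ext (mem_center_iff.1 b.2 a)

lemma commutator_eq_top_of_surjective {G H : Type*} [Group G] [Group H] (hG : commutator G = ⊤)
    (f : G →* H) (hf : Function.Surjective f) : commutator H = ⊤ := by
  have : Group.IsPerfect G := ⟨hG⟩
  exact (Group.IsPerfect.ofSurjective (f := f) hf).commutator_eq_top

/-- Every element of the image of a perfect group is a product of commutators. -/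
lemma apply_mem_commutator {G H : Type*} [Group G] [Group H] (hG : commutator G = ⊤)
    (f : G →* H) (g : G) : f g ∈ commutator H := by
  have h : (commutator G).map f ≤ commutator H := by
    rw [commutator_def, commutator_def, map_commutator]
    exact commutator_mono le_top le_top
  exact h (mem_map_of_mem f (hG ▸ mem_top g))

lemma mem_ker_of_map_eq {E G : Type*} [Group E] [Group G] (π : E →* G) {a b : E}
    (h : π a = π b) : a * b⁻¹ ∈ π.ker := by
  rw [MonoidHom.mem_ker, map_mul, map_inv, h, mul_inv_cancel]

/-- Two lifts of an element along a central extension have the same conjugation action. -/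
lemma conj_eq_of_map_eq {E G : Type*} [Group E] [Group G] (π : E →* G)
    (hc : π.ker ≤ center E) {a b : E} (h : π a = π b) (x : E) :
    a * x * a⁻¹ = b * x * b⁻¹ := by
  have h1 := mem_center_iff.1 (hc (mem_ker_of_map_eq π h)) (b * x * b⁻¹)
  have h2 : a * x * a⁻¹ = (a * b⁻¹) * (b * x * b⁻¹) * (a * b⁻¹)⁻¹ := by group
  rw [h2, ← h1]
  group

/-- The commutator of two elements only depends on their images in the base of a central
extension. -/
lemma comm_eq_of_map_eq {E G : Type*} [Group E] [Group G] (π : E →* G)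
    (hc : π.ker ≤ center E) {a b a' b' : E} (h : π a = π a') (h' : π b = π b') :
    a * b * a⁻¹ * b⁻¹ = a' * b' * a'⁻¹ * b'⁻¹ := by
  have h1 := conj_eq_of_map_eq π hc h b
  have h2 := conj_eq_of_map_eq π hc h' a'⁻¹
  calc a * b * a⁻¹ * b⁻¹ = a' * b * a'⁻¹ * b⁻¹ := by rw [h1]
    _ = a' * (b * a'⁻¹ * b⁻¹) := by group
    _ = a' * b' * a'⁻¹ * b'⁻¹ := by rw [h2]; group

/-- Lifts of a homomorphism from a perfect group along a central extension are unique. -/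
lemma lift_unique {H E G : Type*} [Group H] [Group E] [Group G] (hH : commutator H = ⊤)
    (π : E →* G) (hc : π.ker ≤ center E) (f₁ f₂ : H →* E) (h : ∀ x, π (f₁ x) = π (f₂ x))
    (x : H) : f₁ x = f₂ x := by
  let d : H →* center E :=
    { toFun := fun x => ⟨f₁ x * (f₂ x)⁻¹, hc (mem_ker_of_map_eq π (h x))⟩
      map_one' := by simp
      map_mul' := fun x y => by
        apply Subtype.ext
        have hy := mem_center_iff.1 (hc (mem_ker_of_map_eq π (h y))) (f₂ x)⁻¹
        simp only [map_mul, mul_inv_rev, MulMemClass.mk_mul_mk]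
        calc f₁ x * f₁ y * ((f₂ y)⁻¹ * (f₂ x)⁻¹)
            = f₁ x * ((f₁ y * (f₂ y)⁻¹) * (f₂ x)⁻¹) := by group
          _ = f₁ x * (f₂ x)⁻¹ * (f₁ y * (f₂ y)⁻¹) := by rw [← hy]; group }
  have := hom_eq_one_of_perfect center_mul_comm hH d x
  have h2 : f₁ x * (f₂ x)⁻¹ = 1 := congrArg Subtype.val this
  exact mul_inv_eq_one.1 h2

/-- A superperfect group has the lifting property along central extensions (by pulling the
extension back). -/
lemma SuperPerfect.lift {H E G : Type u} [Group H] [Group E] [Group G] (hH : SuperPerfect H)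
    (π : E →* G) (hs : Function.Surjective π) (hc : π.ker ≤ center E) (f : H →* G) :
    ∃ s : H →* E, ∀ x, π (s x) = f x := by
  let P : Subgroup (E × H) :=
    (π.comp (MonoidHom.fst E H)).eqLocus (f.comp (MonoidHom.snd E H))
  let ρ : P →* H := (MonoidHom.snd E H).comp P.subtype
  obtain ⟨s, hs⟩ := hH.split P ρ
    (fun h => by
      obtain ⟨e, he⟩ := hs (f h)
      exact ⟨⟨(e, h), he⟩, rfl⟩)
    (by
      rintro ⟨⟨e, h⟩, hp⟩ hk
      have hp' : π e = f h := hp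
      have hk' : h = 1 := hk
      subst hk'
      rw [map_one] at hp'
      have hec := hc (show e ∈ π.ker from hp')
      rw [mem_center_iff] at hec ⊢
      rintro ⟨⟨e', h'⟩, hp2⟩
      apply Subtype.ext
      simp [hec e'])
  refine ⟨((MonoidHom.fst E H).comp P.subtype).comp s, fun x => ?_⟩
  have h1 : π (s x).1.1 = f (s x).1.2 := (s x).2
  have h2 : (s x).1.2 = x := hs x
  rw [h2] at h1
  exact h1

lemma SuperPerfect.of_mulEquiv {G H : Type u} [Group G] [Group H] (hG : SuperPerfect G)
    (e : G ≃* H) : SuperPerfect H where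
  perfect := commutator_eq_top_of_surjective hG.perfect e.toMonoidHom e.surjective
  split E _ π hs hc := by
    obtain ⟨s, h⟩ := hG.lift π hs hc e.toMonoidHom
    exact ⟨s.comp e.symm.toMonoidHom, fun g => by simp [h]⟩

/-- Over a perfect group, elements of a central extension lying over the centre are central:
taking the commutator with such an element is a homomorphism to an abelian group. -/
lemma mem_center_of_map_mem_center {E G : Type*} [Group E] [Group G] (hG : commutator G = ⊤)
    (π : E →* G) (hs : Function.Surjective π) (hc : π.ker ≤ center E) {z : E}
    (hz : π z ∈ center G) : z ∈ center E := by
  have hk : ∀ y : E, z * y * z⁻¹ * y⁻¹ ∈ center E := fun y => hc (by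
    rw [mem_center_iff] at hz
    rw [MonoidHom.mem_ker, map_mul, map_mul, map_mul, map_inv, map_inv, ← hz]
    group)
  let χ : E →* center E :=
    { toFun := fun y => ⟨z * y * z⁻¹ * y⁻¹, hk y⟩
      map_one' := by simp
      map_mul' := fun x y => by
        apply Subtype.ext
        have hy := mem_center_iff.1 (hk y) x
        simp only [MulMemClass.mk_mul_mk]
        calc z * (x * y) * z⁻¹ * (x * y)⁻¹
            = z * x * z⁻¹ * ((z * y * z⁻¹ * y⁻¹) * x⁻¹) := by group
          _ = z * x * z⁻¹ * (x⁻¹ * (x * (z * y * z⁻¹ * y⁻¹)) * x⁻¹) := by group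
          _ = z * x * z⁻¹ * x⁻¹ * (z * y * z⁻¹ * y⁻¹) := by rw [hy]; group }
  rw [mem_center_iff]
  intro y
  have h1 : (commutator E).map π = ⊤ := by
    rw [commutator_def, map_commutator, map_top_of_surjective π hs, ← commutator_def, hG]
  obtain ⟨c, hcm, hcy⟩ : π y ∈ (commutator E).map π := h1 ▸ mem_top _
  have h2 : χ c = 1 := hom_eq_one_of_mem_commutator center_mul_comm χ hcm
  have h3 : z * c * z⁻¹ * c⁻¹ = 1 := congrArg Subtype.val h2
  have h4 := comm_eq_of_map_eq π hc (rfl : π z = π z) hcy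
  rw [h3] at h4
  have h5 : z * y * z⁻¹ = y := mul_inv_eq_one.1 h4.symm
  exact (mul_inv_eq_iff_eq_mul.1 h5).symm

/-! ### Superperfect groups have vanishing second homology -/

section BarExtension

variable (G : Type u) [Group G]

/-- Two-chains modulo boundaries, the target of the universal 2-cocycle. -/
abbrev ChainQuot : Type u :=
  FreeAbelianGroup (G × G) ⧸ (BarHomology.d3 G).range

/-- The universal (non-normalised) 2-cocycle `(g, h) ↦ [g|h]`. -/
def cocyc (g h : G) : ChainQuot G := QuotientAddGroup.mk (FreeAbelianGroup.of (g, h))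

lemma cocyc_rel (g h k : G) :
    cocyc G h k - cocyc G (g * h) k + cocyc G g (h * k) - cocyc G g h = 0 := by
  have : (QuotientAddGroup.mk (BarHomology.d3 G (FreeAbelianGroup.of (g, h, k))) :
      ChainQuot G) = 0 :=
    (QuotientAddGroup.eq_zero_iff _).2 ⟨_, rfl⟩
  rw [BarHomology.d3, FreeAbelianGroup.lift_apply_of] at this
  exact this

lemma cocyc_one_left (k : G) : cocyc G 1 k = cocyc G 1 1 := by
  have := cocyc_rel G 1 1 k
  simp only [one_mul, sub_self, zero_add] at this
  exact sub_eq_zero.1 this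

lemma cocyc_one_right (g : G) : cocyc G g 1 = cocyc G 1 1 := by
  have := cocyc_rel G g 1 1
  simp only [mul_one, sub_add_cancel] at this
  exact (sub_eq_zero.1 this).symm

/-- The extension of `G` by `ChainQuot G` defined by the universal cocycle. -/
@[ext]
structure BarExt where
  /-- The component in the kernel. -/
  fib : ChainQuot G
  /-- The component in the base. -/
  base : G

instance : Mul (BarExt G) :=
  ⟨fun x y => ⟨x.fib + y.fib + cocyc G x.base y.base, x.base * y.base⟩⟩

instance : Inv (BarExt G) :=
  ⟨fun x => ⟨-x.fib - cocyc G x.base⁻¹ x.base - cocyc G 1 1, x.base⁻¹⟩⟩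

instance : One (BarExt G) := ⟨⟨-cocyc G 1 1, 1⟩⟩

instance : Group (BarExt G) :=
  Group.ofLeftAxioms
    (fun x y z => BarExt.ext
      (by
        have := cocyc_rel G x.base y.base z.base
        change x.fib + y.fib + cocyc G x.base y.base + z.fib + cocyc G (x.base * y.base) z.base
          = x.fib + (y.fib + z.fib + cocyc G y.base z.base) + cocyc G x.base (y.base * z.base)
        rw [← sub_eq_zero, ← neg_eq_zero, ← this]
        abel)
      (mul_assoc _ _ _))
    (fun x => BarExt.ext
      (by
        change -cocyc G 1 1 + x.fib + cocyc G 1 x.base = x.fib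
        rw [cocyc_one_left G x.base]; abel)
      (one_mul _))
    (fun x => BarExt.ext
      (by
        change -x.fib - cocyc G x.base⁻¹ x.base - cocyc G 1 1 + x.fib
          + cocyc G x.base⁻¹ x.base = -cocyc G 1 1
        abel)
      (inv_mul_cancel _))

lemma BarExt.mul_fib (x y : BarExt G) :
    (x * y).fib = x.fib + y.fib + cocyc G x.base y.base := rfl

lemma BarExt.mul_base (x y : BarExt G) : (x * y).base = x.base * y.base := rfl

/-- The projection of the universal bar extension. -/
def BarExt.proj : BarExt G →* G where
  toFun := BarExt.base
  map_one' := rfl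
  map_mul' _ _ := rfl

variable {G}

/-- A splitting of the universal bar extension is a 1-cochain whose coboundary is the universal
cocycle, so every 2-cycle is a boundary. -/
lemma SuperPerfect.subsingleton_H2 (hG : SuperPerfect G) : Subsingleton (BarHomology.H2 G) := by
  obtain ⟨s, hs⟩ := hG.split (BarExt G) (BarExt.proj G) (fun g => ⟨⟨0, g⟩, rfl⟩) (by
    intro z hz
    have hz' : z.base = 1 := hz
    rw [mem_center_iff]
    intro x
    apply BarExt.ext
    · rw [BarExt.mul_fib, BarExt.mul_fib, hz', cocyc_one_left, cocyc_one_right]; abel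
    · rw [BarExt.mul_base, BarExt.mul_base, hz']; simp)
  have hs' : ∀ g, (s g).base = g := hs
  -- the cochain `β` with `β ∘ d2` equal to minus the quotient map
  let β : FreeAbelianGroup G →+ ChainQuot G := FreeAbelianGroup.lift fun g => (s g).fib
  have hβ : ∀ x, β (BarHomology.d2 G x) = -(QuotientAddGroup.mk x : ChainQuot G) := by
    intro x
    have : β.comp (BarHomology.d2 G) = -(QuotientAddGroup.mk' (BarHomology.d3 G).range) := by
      apply FreeAbelianGroup.lift_ext
      rintro ⟨g, h⟩
      have h1 := congrArg BarExt.fib (s.map_mul g h)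
      rw [BarExt.mul_fib, hs', hs'] at h1
      simp only [AddMonoidHom.comp_apply, BarHomology.d2, FreeAbelianGroup.lift_apply_of, map_add,
        map_sub, β, h1, AddMonoidHom.neg_apply, QuotientAddGroup.mk'_apply]
      change _ = -cocyc G g h
      abel
    exact DFunLike.congr_fun this x
  have hle : ∀ x : (BarHomology.d2 G).ker,
      x ∈ (BarHomology.d3 G).range.addSubgroupOf (BarHomology.d2 G).ker := by
    rintro ⟨x, hx⟩
    have h1 := hβ x
    rw [(AddMonoidHom.mem_ker).1 hx, map_zero, eq_comm, neg_eq_zero,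
      QuotientAddGroup.eq_zero_iff] at h1
    exact h1
  refine ⟨fun a b => ?_⟩
  unfold BarHomology.H2 at a b ⊢
  obtain ⟨a, rfl⟩ := QuotientAddGroup.mk_surjective a
  obtain ⟨b, rfl⟩ := QuotientAddGroup.mk_surjective b
  exact QuotientAddGroup.eq.2 (hle _)

end BarExtension

lemma subsingleton_abelianization {G : Type*} [Group G] (hG : commutator G = ⊤) :
    Subsingleton (Abelianization G) := by
  have h : ∀ x : Abelianization G, x = 1 := fun x => by
    obtain ⟨g, rfl⟩ := QuotientGroup.mk_surjective x
    exact (QuotientGroup.eq_one_iff g).2 (hG ▸ mem_top g)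
  exact ⟨fun a b => (h a).trans (h b).symm⟩

end SymplecticStabilizer

/-! ### Arithmetic of finite fields of odd order -/

namespace SymplecticStabilizer

universe u

open Subgroup

section FieldArith

variable {K : Type*} [Field K] [Fintype K]

/-- A scalar `a` witnessing the vanishing of alternating forms on `K` that are invariant under
multiplication by squares; the conditions on `a` exclude the roots of a polynomial of degree at
most ten. -/
lemma exists_good_scalar (hq : 10 < Fintype.card K) :
    ∃ a : K, a ≠ 0 ∧ a + 1 ≠ 0 ∧
      (a ^ 2 * (a + 1) ^ 2 + 2 * a + 1) ^ 2 - 4 * a ^ 2 * (a + 1) ^ 4 ≠ 0 := by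
  classical
  open Polynomial in
  let p : K[X] := (X ^ 2 * (X + 1) ^ 2 + 2 * X + 1) ^ 2 - 4 * X ^ 2 * (X + 1) ^ 4
  have hp : p ≠ 0 := by
    intro h
    have := congrArg (Polynomial.eval 0) h
    simp [p] at this
  open Polynomial in
  have hX1 : (X + 1 : K[X]) ≠ 0 := by
    intro h
    have := congrArg (Polynomial.eval 0) h
    simp at this
  open Polynomial in
  have hr : (X * (X + 1) * p : K[X]) ≠ 0 := mul_ne_zero (mul_ne_zero X_ne_zero hX1) hp
  open Polynomial in
  have hd : (X * (X + 1) * p : K[X]).natDegree ≤ 10 := by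
    dsimp only [p]
    compute_degree
  obtain ⟨a, ha⟩ := Polynomial.exists_eval_ne_zero_of_natDegree_lt_card _ hr (by
    rw [Cardinal.mk_fintype]
    exact_mod_cast lt_of_le_of_lt hd hq)
  simp only [p, Polynomial.eval_mul, Polynomial.eval_add, Polynomial.eval_sub, Polynomial.eval_pow,
    Polynomial.eval_X, Polynomial.eval_one, Polynomial.eval_ofNat] at ha
  exact ⟨a, left_ne_zero_of_mul (left_ne_zero_of_mul ha),
    right_ne_zero_of_mul (left_ne_zero_of_mul ha), right_ne_zero_of_mul ha⟩

/-- An alternating biadditive map on a finite field of odd order `≠ 3, 9` which is invariant under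
simultaneous multiplication by squares vanishes. For `q > 10` the identity
`2a = (a+1)² - a² - 1` computes the adjoint of `2a` in two ways; for `q = 5, 7` the
additive group is cyclic. -/
lemma alternating_eq_zero (hodd : Odd (Fintype.card K)) (h3 : Fintype.card K ≠ 3)
    (h9 : Fintype.card K ≠ 9) {A : Type*} [AddCommGroup A] (f : K →+ K →+ A)
    (halt : ∀ t, f t t = 0) (hinv : ∀ a s t : K, a ≠ 0 → f (a ^ 2 * s) (a ^ 2 * t) = f s t)
    (s t : K) : f s t = 0 := by
  by_cases hq : 10 < Fintype.card K
  · obtain ⟨a, ha, ha1, hP⟩ := exists_good_scalar hq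
    have key : ∀ b s t : K, b ≠ 0 → f (b ^ 2 * s) t = f s ((b⁻¹) ^ 2 * t) := by
      intro b s t hb
      rw [← hinv b s _ hb]
      congr 1
      field_simp
    let g : K := ((a + 1)⁻¹) ^ 2 - (a⁻¹) ^ 2 - 1
    have h2a : ∀ s t : K, f (2 * a * s) t = f s (g * t) := by
      intro s t
      have e1 : 2 * a * s = (a + 1) ^ 2 * s - a ^ 2 * s - s := by ring
      have e2 : g * t = ((a + 1)⁻¹) ^ 2 * t - (a⁻¹) ^ 2 * t - t := by simp only [g]; ring
      rw [e1, e2, map_sub, map_sub, AddMonoidHom.sub_apply, AddMonoidHom.sub_apply,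
        key _ _ _ ha1, key _ _ _ ha, map_sub, map_sub]
    have h4 : ∀ s t : K, f s ((g ^ 2 - 4 * (a⁻¹) ^ 2) * t) = 0 := by
      intro s t
      have e1 : f (2 * a * (2 * a * s)) t = f s (g ^ 2 * t) := by
        rw [h2a, h2a]; congr 1; ring
      have e2 : f (2 * a * (2 * a * s)) t = f s (4 * (a⁻¹) ^ 2 * t) := by
        have : 2 * a * (2 * a * s) = a ^ 2 * ((4 : ℕ) • s) := by
          rw [nsmul_eq_mul]; push_cast; ring
        rw [this, key _ _ _ ha, map_nsmul, AddMonoidHom.nsmul_apply, ← map_nsmul]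
        congr 1
        rw [nsmul_eq_mul]; push_cast; ring
      rw [sub_mul, map_sub, ← e1, ← e2, sub_self]
    have hne : g ^ 2 - 4 * (a⁻¹) ^ 2 ≠ 0 := by
      intro h0
      apply hP
      have : g ^ 2 - 4 * (a⁻¹) ^ 2 =
          ((a ^ 2 * (a + 1) ^ 2 + 2 * a + 1) ^ 2 - 4 * a ^ 2 * (a + 1) ^ 4) /
            (a ^ 4 * (a + 1) ^ 4) := by
        simp only [g]
        field_simp
        ring
      rw [this, div_eq_zero_iff] at h0
      rcases h0 with h0 | h0
      · exact h0
      · exact absurd h0 (mul_ne_zero (pow_ne_zero _ ha) (pow_ne_zero _ ha1))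
    have := h4 s ((g ^ 2 - 4 * (a⁻¹) ^ 2)⁻¹ * t)
    rwa [mul_inv_cancel_left₀ hne] at this
  · have h1 : 1 < Fintype.card K := Fintype.one_lt_card
    have hp : (Fintype.card K).Prime := by
      generalize Fintype.card K = q at *
      interval_cases q <;> first | omega | (exfalso; revert hodd; decide) | norm_num
    have : Fact (Nat.card K).Prime := ⟨by rwa [Nat.card_eq_fintype_card]⟩
    have hz : ∀ x : K, ∃ m : ℤ, x = m • (1 : K) := fun x => by
      have := mem_zmultiples_of_prime_card (p := Nat.card K) rfl (g := (1 : K)) (g' := x)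
        one_ne_zero
      obtain ⟨m, hm⟩ := this
      exact ⟨m, hm.symm⟩
    obtain ⟨m, rfl⟩ := hz s
    obtain ⟨n, rfl⟩ := hz t
    rw [map_zsmul, map_zsmul, AddMonoidHom.zsmul_apply, halt, smul_zero, smul_zero]

/-- A scalar with `a² ≠ 0, 1` exists in a field with more than three elements. -/
lemma exists_sq_ne_one (hq : 3 < Fintype.card K) : ∃ a : K, a ≠ 0 ∧ a ^ 2 ≠ 1 := by
  classical
  by_contra! h
  have hsub : (Finset.univ : Finset K) ⊆ {0, 1, -1} := by
    intro a _
    by_cases ha : a = 0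
    · simp [ha]
    · rcases sq_eq_one_iff.1 (h a ha) with h | h <;> simp [h]
  have := Finset.card_le_card hsub
  have h3 : ({0, 1, -1} : Finset K).card ≤ 3 := Finset.card_le_three
  rw [Finset.card_univ] at this
  omega

/-- In a finite field of odd order some non-square `n` has `1 - n` a non-square, by counting. -/
lemma exists_nonsquare_pair (hchar : ringChar K ≠ 2) :
    ∃ n : K, ¬ IsSquare n ∧ ¬ IsSquare (1 - n) := by
  classical
  by_contra! h
  have hnn : ∀ a : K, 0 ≤ quadraticChar K a + quadraticChar K (1 - a) := by
    intro a
    by_cases ha : IsSquare a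
    · by_cases ha0 : a = 0
      · subst ha0; simp
      · rw [(quadraticChar_one_iff_isSquare ha0).2 ha]
        by_cases hb : 1 - a = 0
        · simp [hb]
        · rcases quadraticChar_dichotomy hb with h | h <;> rw [h] <;> norm_num
    · have hb := h a ha
      have hb0 : 1 - a ≠ 0 := by
        intro h0
        apply ha
        rw [← sub_eq_zero.1 h0]
        exact IsSquare.one
      rw [(quadraticChar_one_iff_isSquare hb0).2 hb, quadraticChar_neg_one_iff_not_isSquare.2 ha]
      norm_num
  have hsum : ∑ a : K, (quadraticChar K a + quadraticChar K (1 - a)) = 0 := by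
    rw [Finset.sum_add_distrib, quadraticChar_sum_zero hchar,
      Fintype.sum_equiv (Equiv.subLeft (1 : K)) (fun a => quadraticChar K (1 - a))
        (fun a => quadraticChar K a) (fun a => rfl), quadraticChar_sum_zero hchar, add_zero]
  have h0 := (Finset.sum_eq_zero_iff_of_nonneg (fun a _ => hnn a)).1 hsum 0 (Finset.mem_univ _)
  simp at h0

/-- The quotient of two non-squares of a finite field is a square. -/
lemma exists_eq_mul_sq {m n : K} (hm : ¬ IsSquare m) (hn : ¬ IsSquare n) :
    ∃ r : K, r ≠ 0 ∧ m = r ^ 2 * n := by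
  classical
  have hm0 : m ≠ 0 := by rintro rfl; exact hm IsSquare.zero
  have hn0 : n ≠ 0 := by rintro rfl; exact hn IsSquare.zero
  have h1 : IsSquare (m * n) := by
    rw [← quadraticChar_one_iff_isSquare (mul_ne_zero hm0 hn0), map_mul,
      quadraticChar_neg_one_iff_not_isSquare.2 hm, quadraticChar_neg_one_iff_not_isSquare.2 hn]
    norm_num
  obtain ⟨r, hr⟩ := h1
  have hr0 : r ≠ 0 := by
    rintro rfl
    exact mul_ne_zero hm0 hn0 (by simpa using hr)
  refine ⟨r / n, div_ne_zero hr0 hn0, ?_⟩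
  field_simp
  rw [hr]; ring

end FieldArith

end SymplecticStabilizer

/-! ### The commutator pairing of a projective lift of an abelian group -/

namespace SymplecticStabilizer

universe u

open Subgroup

/-- The centre as a commutative group. -/
instance centerCommGroup (E : Type*) [Group E] : CommGroup (center E) :=
  { (inferInstance : Group (center E)) with mul_comm := center_mul_comm }

section Pairing

variable {M E : Type*} [AddCommGroup M] [Group E]

lemma comm_mul_left {a b d : E} (h : b * d * b⁻¹ * d⁻¹ ∈ center E) :
    (a * b) * d * (a * b)⁻¹ * d⁻¹ = (a * d * a⁻¹ * d⁻¹) * (b * d * b⁻¹ * d⁻¹) := by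
  calc (a * b) * d * (a * b)⁻¹ * d⁻¹ = a * (b * d * b⁻¹ * d⁻¹) * (d * a⁻¹ * d⁻¹) := by group
    _ = (b * d * b⁻¹ * d⁻¹) * a * (d * a⁻¹ * d⁻¹) := by rw [mem_center_iff.1 h a]
    _ = (b * d * b⁻¹ * d⁻¹) * (a * d * a⁻¹ * d⁻¹) := by group
    _ = _ := (mem_center_iff.1 h _).symm

lemma comm_mul_right {a b d : E} (h : a * d * a⁻¹ * d⁻¹ ∈ center E) :
    a * (b * d) * a⁻¹ * (b * d)⁻¹ = (a * b * a⁻¹ * b⁻¹) * (a * d * a⁻¹ * d⁻¹) := by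
  calc a * (b * d) * a⁻¹ * (b * d)⁻¹ = (a * b * a⁻¹) * (a * d * a⁻¹ * d⁻¹) * b⁻¹ := by group
    _ = (a * d * a⁻¹ * d⁻¹) * (a * b * a⁻¹) * b⁻¹ := by rw [mem_center_iff.1 h]
    _ = (a * d * a⁻¹ * d⁻¹) * (a * b * a⁻¹ * b⁻¹) := by group
    _ = _ := (mem_center_iff.1 h _).symm

lemma comm_eq_of_center_left {a b x : E} (h : a⁻¹ * b ∈ center E) :
    b * x * b⁻¹ * x⁻¹ = a * x * a⁻¹ * x⁻¹ := by
  have h1 := mem_center_iff.1 h x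
  calc b * x * b⁻¹ * x⁻¹ = a * ((a⁻¹ * b) * x) * b⁻¹ * x⁻¹ := by group
    _ = a * (x * (a⁻¹ * b)) * b⁻¹ * x⁻¹ := by rw [h1]
    _ = _ := by group

lemma comm_eq_of_center_right {a b x : E} (h : a⁻¹ * b ∈ center E) :
    x * b * x⁻¹ * b⁻¹ = x * a * x⁻¹ * a⁻¹ := by
  have h1 := comm_eq_of_center_left (x := x) h
  calc x * b * x⁻¹ * b⁻¹ = (b * x * b⁻¹ * x⁻¹)⁻¹ := by group
    _ = _ := by rw [h1]; group

lemma pairing_mem_center (L : M → E) (hL : ∀ s t, (L s * L t)⁻¹ * L (s + t) ∈ center E)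
    (s t : M) : L s * L t * (L s)⁻¹ * (L t)⁻¹ ∈ center E := by
  have h1 := hL s t
  have h2 := hL t s
  rw [add_comm] at h2
  have h3 := (center E).mul_mem h2 ((center E).inv_mem h1)
  have h4 : (L t * L s)⁻¹ * L (s + t) * ((L s * L t)⁻¹ * L (s + t))⁻¹ =
      (L t * L s)⁻¹ * (L s * L t) := by group
  rw [h4] at h3
  have h5 := mem_center_iff.1 h3 (L t * L s)
  have h6 : L s * L t * (L s)⁻¹ * (L t)⁻¹ = (L t * L s)⁻¹ * (L s * L t) := by
    calc L s * L t * (L s)⁻¹ * (L t)⁻¹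
        = ((L t * L s) * ((L t * L s)⁻¹ * (L s * L t))) * (L t * L s)⁻¹ := by group
      _ = _ := by rw [h5]; group
  rw [h6]
  exact h3

/-- If `L : M → E` is a homomorphism modulo the centre, the commutator of the values of `L` is a
biadditive map to the centre. -/
def commPairing (L : M → E) (hL : ∀ s t, (L s * L t)⁻¹ * L (s + t) ∈ center E) :
    M →+ M →+ Additive (center E) :=
  AddMonoidHom.mk' (fun s => AddMonoidHom.mk'
    (fun t => Additive.ofMul ⟨L s * L t * (L s)⁻¹ * (L t)⁻¹, pairing_mem_center L hL s t⟩)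
    (fun t t' => by
      rw [← ofMul_mul]
      congr 1
      apply Subtype.ext
      simp only [MulMemClass.mk_mul_mk]
      rw [comm_eq_of_center_right (hL t t'), comm_mul_right (pairing_mem_center L hL s t')]))
    (fun s s' => by
      ext t
      simp only [AddMonoidHom.mk'_apply, AddMonoidHom.add_apply]
      rw [← ofMul_mul]
      congr 1
      exact Subtype.ext ((comm_eq_of_center_left (hL s s')).trans
        (comm_mul_left (pairing_mem_center L hL s' t))))

lemma commPairing_coe (L : M → E) (hL : ∀ s t, (L s * L t)⁻¹ * L (s + t) ∈ center E) (s t : M) :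
    ((commPairing L hL s t).toMul : E) = L s * L t * (L s)⁻¹ * (L t)⁻¹ := rfl

lemma commPairing_self (L : M → E) (hL : ∀ s t, (L s * L t)⁻¹ * L (s + t) ∈ center E) (s : M) :
    commPairing L hL s s = 0 := by
  apply Additive.toMul.injective
  apply Subtype.ext
  rw [commPairing_coe]
  simp

end Pairing

end SymplecticStabilizer

/-! ### `SL₂` over a finite field: lifting root subgroups to a central extension -/

namespace SymplecticStabilizer

universe u

open Subgroup Matrix

section SL2

variable {K : Type*} [Field K] {E : Type*} [Group E]

/-- `Ov π e M`: the element `e` of a group over `SL₂(K)` lies over the matrix `M`. -/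
def Ov (π : E →* SpecialLinearGroup (Fin 2) K) (e : E) (M : Matrix (Fin 2) (Fin 2) K) : Prop :=
  (π e : Matrix (Fin 2) (Fin 2) K) = M

variable {π : E →* SpecialLinearGroup (Fin 2) K}

lemma Ov.mul {e f : E} {a b c d a' b' c' d' p q r s : K} (he : Ov π e !![a, b; c, d])
    (hf : Ov π f !![a', b'; c', d']) (hp : a * a' + b * c' = p) (hq : a * b' + b * d' = q)
    (hr : c * a' + d * c' = r) (hs : c * b' + d * d' = s) : Ov π (e * f) !![p, q; r, s] := by
  refine (congrArg Subtype.val (map_mul π e f)).trans ?_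
  change (π e).1 * (π f).1 = _
  have he' : (π e).1 = _ := he
  have hf' : (π f).1 = _ := hf
  rw [he', hf', mul_fin_two, hp, hq, hr, hs]

lemma Ov.inv {e : E} {a b c d : K} (he : Ov π e !![a, b; c, d]) :
    Ov π e⁻¹ !![d, -b; -c, a] := by
  refine (congrArg Subtype.val (map_inv π e)).trans ?_
  change adjugate (π e).1 = _
  have he' : (π e).1 = _ := he
  rw [he', adjugate_fin_two_of]

lemma Ov.map_eq {e f : E} {M : Matrix (Fin 2) (Fin 2) K} (he : Ov π e M) (hf : Ov π f M) :
    π e = π f := Subtype.ext (Eq.trans he (Eq.symm hf))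

lemma Ov.one : Ov π (1 : E) !![1, 0; 0, 1] := by
  refine (congrArg Subtype.val (map_one π)).trans ?_
  exact one_fin_two

lemma exists_ov (hs : Function.Surjective π) {a b c d : K} (h : a * d - b * c = 1) :
    ∃ e, Ov π e !![a, b; c, d] := by
  obtain ⟨e, he⟩ := hs ⟨!![a, b; c, d], by rw [det_fin_two_of, h]⟩
  exact ⟨e, by rw [Ov, he]⟩

lemma Ov.conj {e f : E} {a s : K} (ha : a ≠ 0) (he : Ov π e !![a, 0; 0, a⁻¹])
    (hf : Ov π f !![1, s; 0, 1]) : Ov π (e * f * e⁻¹) !![1, a ^ 2 * s; 0, 1] :=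
  (he.mul hf rfl rfl rfl rfl).mul he.inv (by field_simp; try ring) (by field_simp; try ring)
    (by field_simp; try ring) (by field_simp; try ring)

/-- Elements over the upper unipotent subgroup commute: their commutator pairing is an alternating
biadditive map invariant under the torus, which acts through squares. -/
lemma unipotent_comm [Fintype K] (hs : Function.Surjective π) (hc : π.ker ≤ center E)
    (hodd : Odd (Fintype.card K)) (h3 : Fintype.card K ≠ 3) (h9 : Fintype.card K ≠ 9)
    {s t : K} {e f : E} (he : Ov π e !![1, s; 0, 1]) (hf : Ov π f !![1, t; 0, 1]) :
    e * f = f * e := by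
  have hL : ∀ t : K, ∃ e, Ov π e !![1, t; 0, 1] := fun t => exists_ov hs (by ring)
  choose L hL using hL
  have hadd : ∀ s t, (L s * L t)⁻¹ * L (s + t) ∈ center E := fun s t => by
    apply hc
    rw [MonoidHom.mem_ker, map_mul, map_inv, inv_mul_eq_one]
    exact ((hL (s + t)).map_eq
      ((hL s).mul (hL t) (by ring) (by ring) (by ring) (by ring))).symm
  have h0 := alternating_eq_zero hodd h3 h9 (commPairing L hadd) (commPairing_self L hadd)
    (fun a s t ha => by
      apply Additive.toMul.injective
      apply Subtype.ext
      rw [commPairing_coe, commPairing_coe]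
      obtain ⟨k, hk⟩ := exists_ov (π := π) hs (a := a) (b := 0) (c := 0) (d := a⁻¹)
        (by field_simp; ring)
      rw [comm_eq_of_map_eq π hc ((hL (a ^ 2 * s)).map_eq (Ov.conj ha hk (hL s)))
        ((hL (a ^ 2 * t)).map_eq (Ov.conj ha hk (hL t)))]
      have hz := mem_center_iff.1 (pairing_mem_center L hadd s t) k
      calc _ = k * (L s * L t * (L s)⁻¹ * (L t)⁻¹) * k⁻¹ := by group
        _ = _ := by rw [hz]; group) s t
  have h1 : L s * L t * (L s)⁻¹ * (L t)⁻¹ = 1 := by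
    rw [← commPairing_coe L hadd, h0]; rfl
  rw [comm_eq_of_map_eq π hc ((hL s).map_eq he) ((hL t).map_eq hf)] at h1
  calc e * f = (e * f * e⁻¹ * f⁻¹) * (f * e) := by group
    _ = _ := by rw [h1, one_mul]

/-- The upper unipotent subgroup lifts canonically, hence equivariantly for the torus. -/
lemma exists_unipotent_lift [Fintype K] (hs : Function.Surjective π) (hc : π.ker ≤ center E)
    (hodd : Odd (Fintype.card K)) (h3 : Fintype.card K ≠ 3) (h9 : Fintype.card K ≠ 9)
    {a₀ : K} (ha₀ : a₀ ≠ 0) (ha₁ : a₀ ^ 2 ≠ 1) :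
    ∃ X : K → E, (∀ t, Ov π (X t) !![1, t; 0, 1]) ∧ (∀ s t, X (s + t) = X s * X t) ∧
      ∀ (a t : K) (e : E), a ≠ 0 → Ov π e !![a, 0; 0, a⁻¹] → e * X t * e⁻¹ = X (a ^ 2 * t) := by
  have hL : ∀ t : K, ∃ e, Ov π e !![1, t; 0, 1] := fun t => exists_ov hs (by ring)
  choose L hL using hL
  obtain ⟨k, hk⟩ := exists_ov (π := π) hs (a := a₀) (b := 0) (c := 0) (d := a₀⁻¹)
    (by field_simp; ring)
  have hd : a₀ ^ 2 - 1 ≠ 0 := sub_ne_zero.2 ha₁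
  refine ⟨fun t => k * L (t / (a₀ ^ 2 - 1)) * k⁻¹ * (L (t / (a₀ ^ 2 - 1)))⁻¹,
    fun t => ?_, fun s t => ?_, fun a t e ha he => ?_⟩
  · exact (Ov.conj ha₀ hk (hL _)).mul (hL _).inv (by ring) (by field_simp; ring) (by ring)
      (by ring)
  · dsimp only
    rw [add_div]
    generalize s / (a₀ ^ 2 - 1) = s
    generalize t / (a₀ ^ 2 - 1) = t
    have h1 : π (L (s + t)) = π (L s * L t) := Ov.map_eq (hL (s + t))
      ((hL s).mul (hL t) (by ring) (by ring) (by ring) (by ring))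
    rw [comm_eq_of_map_eq π hc rfl h1]
    have c1 : Commute (L s) (k * L t * k⁻¹ * (L t)⁻¹) := unipotent_comm hs hc hodd h3 h9 (hL s)
      ((Ov.conj ha₀ hk (hL t)).mul (hL t).inv (by ring) rfl (by ring) (by ring))
    calc k * (L s * L t) * k⁻¹ * (L s * L t)⁻¹
        = k * L s * k⁻¹ * ((k * L t * k⁻¹ * (L t)⁻¹) * (L s)⁻¹) := by group
      _ = _ := by rw [← c1.inv_left.eq]; group
  · have h1 : π (e * k * e⁻¹) = π k := Ov.map_eq
      ((he.mul hk rfl rfl rfl rfl).mul he.inv (by field_simp; ring) (by field_simp; ring)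
        (by field_simp; ring) (by field_simp; ring)) hk
    have h2 : π (e * L (t / (a₀ ^ 2 - 1)) * e⁻¹) = π (L (a ^ 2 * t / (a₀ ^ 2 - 1))) := Ov.map_eq
      (mul_div_assoc (a ^ 2) t _ ▸ Ov.conj ha he (hL _)) (hL _)
    dsimp only
    rw [← comm_eq_of_map_eq π hc h1 h2]
    group

end SL2

end SymplecticStabilizer

/-! ### `SL₂` over a finite field: Steinberg's relations and the splitting -/

namespace SymplecticStabilizer

universe u

open Subgroup Matrix

section SL2

variable {K : Type*} [Field K] {E : Type*} [Group E]
variable {π : E →* SpecialLinearGroup (Fin 2) K}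

/-- Compatible lifts `X`, `Y` of the upper and lower root subgroups of `SL₂(K)` to a group over it,
permuted by conjugation with elements over the normaliser of the torus. -/
structure RootLift (π : E →* SpecialLinearGroup (Fin 2) K) (X Y : K → E) : Prop where
  X_ov : ∀ t, Ov π (X t) !![1, t; 0, 1]
  Y_ov : ∀ t, Ov π (Y t) !![1, 0; t, 1]
  X_add : ∀ s t, X (s + t) = X s * X t
  Y_add : ∀ s t, Y (s + t) = Y s * Y t
  hX : ∀ (a t : K) (e : E), a ≠ 0 → Ov π e !![a, 0; 0, a⁻¹] → e * X t * e⁻¹ = X (a ^ 2 * t)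
  hY : ∀ (a t : K) (e : E), a ≠ 0 → Ov π e !![a, 0; 0, a⁻¹] →
    e * Y t * e⁻¹ = Y ((a⁻¹) ^ 2 * t)
  wX : ∀ (b t : K) (e : E), b ≠ 0 → Ov π e !![0, b; -b⁻¹, 0] →
    e * X t * e⁻¹ = Y (-((b⁻¹) ^ 2 * t))
  wY : ∀ (b t : K) (e : E), b ≠ 0 → Ov π e !![0, b; -b⁻¹, 0] →
    e * Y t * e⁻¹ = X (-(b ^ 2 * t))

lemma exists_rootLift [Fintype K] (hs : Function.Surjective π) (hc : π.ker ≤ center E)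
    (hodd : Odd (Fintype.card K)) (h3 : Fintype.card K ≠ 3) (h9 : Fintype.card K ≠ 9)
    {a₀ : K} (ha₀ : a₀ ≠ 0) (ha₁ : a₀ ^ 2 ≠ 1) : ∃ X Y : K → E, RootLift π X Y := by
  obtain ⟨X, hov, hadd, hX⟩ := exists_unipotent_lift hs hc hodd h3 h9 ha₀ ha₁
  obtain ⟨w, hw⟩ := exists_ov (π := π) hs (a := 0) (b := 1) (c := -1) (d := 0) (by ring)
  refine ⟨X, fun t => w * X (-t) * w⁻¹, hov, fun t => ?_, hadd, fun s t => ?_, hX,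
    fun a t e ha he => ?_, fun b t e hb he => ?_, fun b t e hb he => ?_⟩
  · exact (hw.mul (hov _) rfl rfl rfl rfl).mul hw.inv (by ring) (by ring) (by ring) (by ring)
  · rw [neg_add, hadd]; group
  · have h1 := hX a⁻¹ (-t) (w⁻¹ * e * w) (inv_ne_zero ha)
      ((hw.inv.mul he rfl rfl rfl rfl).mul hw (by ring) (by ring) (by ring) (by rw [inv_inv]; ring))
    rw [← mul_neg, ← h1]; group
  · have h1 := hX b⁻¹ t (w⁻¹ * e) (inv_ne_zero hb)
      (hw.inv.mul he (by ring) (by ring) (by ring) (by rw [inv_inv]; ring))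
    rw [neg_neg, ← h1]; group
  · have h1 := hX (-b) (-t) (e * w) (neg_ne_zero.2 hb)
      (he.mul hw (by ring) (by ring) (by ring) (by rw [inv_neg]; ring))
    have h2 : -(b ^ 2 * t) = (-b) ^ 2 * -t := by ring
    rw [h2, ← h1]; group


/-- The lift `x(b) y(-b⁻¹) x(b)` of a monomial matrix. -/
def wElt (X Y : K → E) (b : K) : E := X b * Y (-b⁻¹) * X b

/-- The lift `w(a) w(1)⁻¹` of the diagonal matrix `diag(a, a⁻¹)`. -/
def hElt (X Y : K → E) (a : K) : E := wElt X Y a * (wElt X Y 1)⁻¹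

variable {X Y : K → E}

lemma RootLift.X_zero (R : RootLift π X Y) : X 0 = 1 := by
  have := R.X_add 0 0
  rw [add_zero] at this
  exact left_eq_mul.1 this

lemma RootLift.Y_zero (R : RootLift π X Y) : Y 0 = 1 := by
  have := R.Y_add 0 0
  rw [add_zero] at this
  exact left_eq_mul.1 this

lemma RootLift.X_neg (R : RootLift π X Y) (t : K) : X (-t) = (X t)⁻¹ := by
  rw [eq_inv_iff_mul_eq_one, ← R.X_add, neg_add_cancel, R.X_zero]

lemma RootLift.Y_neg (R : RootLift π X Y) (t : K) : Y (-t) = (Y t)⁻¹ := by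
  rw [eq_inv_iff_mul_eq_one, ← R.Y_add, neg_add_cancel, R.Y_zero]

lemma RootLift.w_ov (R : RootLift π X Y) {b : K} (hb : b ≠ 0) :
    Ov π (wElt X Y b) !![0, b; -b⁻¹, 0] :=
  ((R.X_ov b).mul (R.Y_ov _) rfl rfl rfl rfl).mul (R.X_ov b) (by field_simp; ring)
    (by field_simp; ring) (by field_simp; ring) (by field_simp; ring)

lemma RootLift.w_inv (R : RootLift π X Y) (b : K) : (wElt X Y b)⁻¹ = wElt X Y (-b) := by
  unfold wElt
  rw [R.X_neg, R.Y_neg, inv_neg, neg_neg]; group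

lemma RootLift.h_ov (R : RootLift π X Y) {a : K} (ha : a ≠ 0) :
    Ov π (hElt X Y a) !![a, 0; 0, a⁻¹] :=
  (R.w_ov ha).mul (R.w_ov one_ne_zero).inv (by field_simp; ring)
    (by ring) (by ring) (by field_simp; ring)

/-- The roles of `X` and `Y` in `w(b)` can be interchanged. -/
lemma RootLift.w_eq (R : RootLift π X Y) {b : K} (hb : b ≠ 0) :
    wElt X Y b = Y (-b⁻¹) * X b * Y (-b⁻¹) := by
  have h1 := R.wX b b _ hb (R.w_ov hb)
  have h2 : -((b⁻¹) ^ 2 * b) = -b⁻¹ := by field_simp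
  rw [h2, mul_inv_eq_iff_eq_mul] at h1
  have h3 : wElt X Y b * X b = (Y (-b⁻¹) * X b * Y (-b⁻¹)) * X b := by
    rw [h1, wElt]; group
  exact mul_right_cancel h3

lemma RootLift.w_conj_w (R : RootLift π X Y) {b : K} (hb : b ≠ 0) :
    wElt X Y 1 * wElt X Y b * (wElt X Y 1)⁻¹ = wElt X Y b⁻¹ := by
  have hw := R.w_ov (one_ne_zero (α := K))
  have h1 := R.wX 1 b _ one_ne_zero hw
  have h2 := R.wY 1 (-b⁻¹) _ one_ne_zero hw
  rw [R.w_eq (inv_ne_zero hb)]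
  calc wElt X Y 1 * wElt X Y b * (wElt X Y 1)⁻¹
      = (wElt X Y 1 * X b * (wElt X Y 1)⁻¹) * (wElt X Y 1 * Y (-b⁻¹) * (wElt X Y 1)⁻¹) *
        (wElt X Y 1 * X b * (wElt X Y 1)⁻¹) := by rw [wElt.eq_1 X Y b]; group
    _ = _ := by rw [h1, h2]; simp

lemma RootLift.h_conj_w (R : RootLift π X Y) {a b : K} (ha : a ≠ 0) :
    hElt X Y a * wElt X Y b * (hElt X Y a)⁻¹ = wElt X Y (a ^ 2 * b) := by
  have hh := R.h_ov ha
  have h1 := R.hX a b _ ha hh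
  have h2 := R.hY a (-b⁻¹) _ ha hh
  calc hElt X Y a * wElt X Y b * (hElt X Y a)⁻¹
      = (hElt X Y a * X b * (hElt X Y a)⁻¹) * (hElt X Y a * Y (-b⁻¹) * (hElt X Y a)⁻¹) *
        (hElt X Y a * X b * (hElt X Y a)⁻¹) := by rw [wElt]; group
    _ = _ := by
      rw [h1, h2, wElt]
      have : (a⁻¹) ^ 2 * -b⁻¹ = -(a ^ 2 * b)⁻¹ := by rw [mul_inv, inv_pow]; ring
      rw [this]

lemma RootLift.h_one : hElt X Y (1 : K) = 1 := mul_inv_cancel _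

lemma RootLift.w_conj_h (R : RootLift π X Y) {b : K} (hb : b ≠ 0) :
    wElt X Y 1 * hElt X Y b * (wElt X Y 1)⁻¹ = hElt X Y b⁻¹ := by
  rw [hElt, hElt, ← R.w_conj_w hb]; group

/-- Steinberg's relation in the form `w(u) w(-(u+v)) w(v) = w(uv/(u+v))` with `u + v = 1`. -/
lemma RootLift.w_mul_w (R : RootLift π X Y) {u v : K} (hu : u ≠ 0) (hv : v ≠ 0) (huv : u + v = 1) :
    wElt X Y u * (wElt X Y 1)⁻¹ * wElt X Y v = wElt X Y (u * v) := by
  have e1 : (wElt X Y 1)⁻¹ = Y 1 * X (-u) * X (-v) * Y 1 := by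
    rw [R.w_inv, R.w_eq (neg_ne_zero.2 one_ne_zero), inv_neg, neg_neg, inv_one, mul_assoc (Y 1) (X (-u)),
      ← R.X_add, ← neg_add, huv]
  have h1 := R.wY u 1 _ hu (R.w_ov hu)
  have h2 : Y 1 * wElt X Y v = wElt X Y v * X (-(v ^ 2 * 1)) := by
    have := R.wY (-v) 1 _ (neg_ne_zero.2 hv) (R.w_ov (neg_ne_zero.2 hv))
    rw [← R.w_inv] at this
    have h' : -((-v) ^ 2 * 1) = -(v ^ 2 * 1) := by ring
    rw [← h', ← this]; group
  have h3 : wElt X Y u * X (-u) = X u * Y (-u⁻¹) := by rw [wElt, R.X_neg]; group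
  have h4 : X (-v) * wElt X Y v = Y (-v⁻¹) * X v := by rw [wElt, R.X_neg]; group
  have h5 : -(u ^ 2 * 1) + u = u * v := by linear_combination (-u) * huv
  have h6 : v + -(v ^ 2 * 1) = u * v := by linear_combination (-v) * huv
  have h7 : -u⁻¹ + -v⁻¹ = -(u * v)⁻¹ := by
    field_simp
    linear_combination (-1) * huv
  calc wElt X Y u * (wElt X Y 1)⁻¹ * wElt X Y v
      = (wElt X Y u * Y 1 * (wElt X Y u)⁻¹) * (wElt X Y u * X (-u)) * X (-v) *
          (Y 1 * wElt X Y v) := by rw [e1]; group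
    _ = (X (-(u ^ 2 * 1)) * X u) * Y (-u⁻¹) * (X (-v) * wElt X Y v) * X (-(v ^ 2 * 1)) := by
        rw [h1, h2, h3]; group
    _ = (X (-(u ^ 2 * 1)) * X u) * (Y (-u⁻¹) * Y (-v⁻¹)) * (X v * X (-(v ^ 2 * 1))) := by
        rw [h4]; group
    _ = _ := by rw [← R.X_add, ← R.Y_add, ← R.X_add, h5, h6, h7, wElt]

/-- Lifts of the torus commute, since the torus is cyclic. -/
lemma RootLift.h_comm [Fintype K] (R : RootLift π X Y)
    (hc : π.ker ≤ center E) {a b : K} (ha : a ≠ 0) (hb : b ≠ 0) :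
    hElt X Y a * hElt X Y b = hElt X Y b * hElt X Y a := by
  obtain ⟨g, hg⟩ := IsCyclic.exists_generator (α := Kˣ)
  have hpow : ∀ (n : ℕ) , Ov π (hElt X Y (g : K) ^ n) !![(g : K) ^ n, 0; 0, ((g : K) ^ n)⁻¹] := by
    intro n
    induction n with
    | zero => simpa using Ov.one (π := π)
    | succ n ih =>
      rw [pow_succ]
      refine ih.mul (R.h_ov g.ne_zero) (by ring) (by ring) (by ring) ?_
      rw [pow_succ, mul_inv]; ring
  have hlift : ∀ c : K, c ≠ 0 → ∃ n : ℕ, π (hElt X Y c) = π (hElt X Y (g : K) ^ n) := by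
    intro c hc0
    obtain ⟨n, hn⟩ := (mem_powers_iff_mem_zpowers (x := g)).2 (hg (Units.mk0 c hc0))
    have hn' : (g : K) ^ n = c := by
      have := congrArg Units.val hn
      simpa using this
    refine ⟨n, Ov.map_eq (R.h_ov hc0) ?_⟩
    rw [← hn']
    exact hpow n
  obtain ⟨m, hm⟩ := hlift a ha
  obtain ⟨n, hn⟩ := hlift b hb
  have h := comm_eq_of_map_eq π hc hm hn
  have h' : hElt X Y (g : K) ^ m * hElt X Y (g : K) ^ n * (hElt X Y (g : K) ^ m)⁻¹ *
      (hElt X Y (g : K) ^ n)⁻¹ = 1 := by group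
  rw [h'] at h
  calc hElt X Y a * hElt X Y b = (hElt X Y a * hElt X Y b * (hElt X Y a)⁻¹ * (hElt X Y b)⁻¹) *
        (hElt X Y b * hElt X Y a) := by group
    _ = _ := by rw [h, one_mul]

lemma RootLift.h_sq_mul [Fintype K] (R : RootLift π X Y)
    (hc : π.ker ≤ center E) {a b : K} (ha : a ≠ 0) (hb : b ≠ 0) :
    hElt X Y (a ^ 2 * b) = hElt X Y (a ^ 2) * hElt X Y b := by
  have key : ∀ b : K, hElt X Y (a ^ 2 * b) = hElt X Y a * hElt X Y b * (hElt X Y a⁻¹)⁻¹ := by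
    intro b
    rw [← R.w_conj_h ha, hElt, ← R.h_conj_w ha, hElt.eq_1 X Y b]; group
  have h1 := key 1
  rw [mul_one, RootLift.h_one, mul_one] at h1
  have hcm : Commute (hElt X Y b) (hElt X Y a⁻¹)⁻¹ :=
    Commute.inv_right (R.h_comm hc hb (inv_ne_zero ha))
  rw [key, h1, mul_assoc, hcm.eq]; group

/-- The lift of the torus is multiplicative. Squares are handled by conjugation; for non-squares
Steinberg's relation is applied to a pair of non-squares with sum one. -/
lemma RootLift.h_mul [Fintype K] (R : RootLift π X Y)
    (hc : π.ker ≤ center E) (hchar : ringChar K ≠ 2) {a b : K} (ha : a ≠ 0) (hb : b ≠ 0) :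
    hElt X Y (a * b) = hElt X Y a * hElt X Y b := by
  have hsq : ∀ {a b : K}, IsSquare a → a ≠ 0 → b ≠ 0 →
      hElt X Y (a * b) = hElt X Y a * hElt X Y b := by
    rintro a b ⟨r, rfl⟩ ha hb
    rw [← sq]
    exact R.h_sq_mul hc (left_ne_zero_of_mul ha) hb
  by_cases hsa : IsSquare a
  · exact hsq hsa ha hb
  by_cases hsb : IsSquare b
  · rw [mul_comm, hsq hsb hb ha, R.h_comm hc ha hb]
  obtain ⟨n, hn, hn'⟩ := exists_nonsquare_pair hchar
  have hn0 : n ≠ 0 := by rintro rfl; exact hn IsSquare.zero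
  have hn1 : 1 - n ≠ 0 := by intro h; rw [h] at hn'; exact hn' IsSquare.zero
  obtain ⟨r, hr, hrn⟩ := exists_eq_mul_sq hn' hn
  have hr2 : r ^ 2 ≠ 0 := pow_ne_zero 2 hr
  have hnn : hElt X Y (n ^ 2) = hElt X Y n * hElt X Y n := by
    have h1 := R.w_mul_w hn0 hn1 (by ring)
    have h2 : hElt X Y n * hElt X Y (1 - n) = hElt X Y (n * (1 - n)) := by
      rw [hElt.eq_1 X Y (n * (1 - n)), ← h1, hElt, hElt]; group
    have h3 : n * (1 - n) = r ^ 2 * n ^ 2 := by rw [hrn]; ring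
    rw [h3, hrn, R.h_sq_mul hc hr hn0, R.h_sq_mul hc hr (pow_ne_zero 2 hn0), ← mul_assoc,
      R.h_comm hc hn0 hr2, mul_assoc] at h2
    exact (mul_left_cancel h2).symm
  obtain ⟨s, hs0, rfl⟩ := exists_eq_mul_sq hsa hn
  obtain ⟨t, ht0, rfl⟩ := exists_eq_mul_sq hsb hn
  have e : s ^ 2 * n * (t ^ 2 * n) = s ^ 2 * (t ^ 2 * n ^ 2) := by ring
  have ht2 : t ^ 2 ≠ 0 := pow_ne_zero 2 ht0
  rw [e, R.h_sq_mul hc hs0 (mul_ne_zero ht2 (pow_ne_zero 2 hn0)),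
    R.h_sq_mul hc ht0 (pow_ne_zero 2 hn0), hnn, R.h_sq_mul hc hs0 hn0,
    R.h_sq_mul hc ht0 hn0, mul_assoc (hElt X Y (s ^ 2)), ← mul_assoc (hElt X Y n),
    R.h_comm hc hn0 ht2, mul_assoc (hElt X Y (t ^ 2))]

end SL2

end SymplecticStabilizer

/-! ### `SL₂` over a finite field: the Bruhat section -/

namespace SymplecticStabilizer

universe u

open Subgroup Matrix

section SL2

variable {K : Type*} [Field K] {E : Type*} [Group E]
variable {π : E →* SpecialLinearGroup (Fin 2) K} {X Y : K → E}

open Classical in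
/-- The set-theoretic section of `π` given by the Bruhat decomposition. -/
noncomputable def bruhat (X Y : K → E) (g : SpecialLinearGroup (Fin 2) K) : E :=
  if g.1 1 0 = 0 then X (g.1 0 0 * g.1 0 1) * hElt X Y (g.1 0 0)
  else X (g.1 0 0 / g.1 1 0) * wElt X Y (-(g.1 1 0)⁻¹) * X (g.1 1 1 / g.1 1 0)

lemma bruhat_of_eq {g : SpecialLinearGroup (Fin 2) K} {a b d : K}
    (hg : g.1 = !![a, b; 0, d]) : bruhat X Y g = X (a * b) * hElt X Y a := by
  simp [bruhat, hg]

lemma bruhat_of_ne {g : SpecialLinearGroup (Fin 2) K} {a b c d : K}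
    (hg : g.1 = !![a, b; c, d]) (hc : c ≠ 0) :
    bruhat X Y g = X (a / c) * wElt X Y (-c⁻¹) * X (d / c) := by
  simp [bruhat, hg, hc]

lemma SL2_exists_entries (g : SpecialLinearGroup (Fin 2) K) :
    ∃ a b c d : K, g.1 = !![a, b; c, d] ∧ a * d - b * c = 1 := by
  refine ⟨g.1 0 0, g.1 0 1, g.1 1 0, g.1 1 1, eta_fin_two _, ?_⟩
  rw [← det_fin_two, g.2]

lemma RootLift.bruhat_ov (R : RootLift π X Y) (g : SpecialLinearGroup (Fin 2) K) :
    π (bruhat X Y g) = g := by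
  obtain ⟨a, b, c, d, hg, hdet⟩ := SL2_exists_entries g
  by_cases hc : c = 0
  · subst hc
    have ha : a ≠ 0 := by rintro rfl; simp at hdet
    have hd : a⁻¹ = d := by field_simp; linear_combination -hdet
    rw [bruhat_of_eq hg]
    exact Subtype.ext (((R.X_ov _).mul (R.h_ov ha) (by ring) (by field_simp; ring) (by ring)
      (by rw [hd]; ring)).trans hg.symm)
  · rw [bruhat_of_ne hg hc]
    have hc' : -c⁻¹ ≠ 0 := neg_ne_zero.2 (inv_ne_zero hc)
    refine Subtype.ext ((((R.X_ov _).mul (R.w_ov hc') rfl rfl rfl rfl).mul (R.X_ov _) ?_ ?_ ?_ ?_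
      ).trans hg.symm)
    · field_simp; ring
    · field_simp; linear_combination hdet
    · field_simp; ring
    · field_simp; ring

lemma RootLift.bruhat_X (R : RootLift π X Y) (t : K) {x : SpecialLinearGroup (Fin 2) K}
    (hx : x.1 = !![1, t; 0, 1]) (g : SpecialLinearGroup (Fin 2) K) :
    bruhat X Y (x * g) = X t * bruhat X Y g := by
  obtain ⟨a, b, c, d, hg, hdet⟩ := SL2_exists_entries g
  have hxg : (x * g).1 = !![a + t * c, b + t * d; c, d] := by
    change x.1 * g.1 = _
    rw [hx, hg, mul_fin_two]; simp
  by_cases hc : c = 0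
  · subst hc
    rw [mul_zero, add_zero] at hxg
    rw [bruhat_of_eq hxg, bruhat_of_eq hg, ← mul_assoc, ← R.X_add]
    congr 2
    linear_combination t * hdet
  · rw [bruhat_of_ne hxg hc, bruhat_of_ne hg hc, ← mul_assoc, ← mul_assoc, ← R.X_add]
    congr 3
    field_simp; ring

lemma RootLift.h_X (R : RootLift π X Y) {a : K} (ha : a ≠ 0) (t : K) :
    hElt X Y a * X t = X (a ^ 2 * t) * hElt X Y a := by
  rw [← R.hX a t _ ha (R.h_ov ha)]; group

lemma RootLift.w_sq (R : RootLift π X Y) :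
    wElt X Y 1 * wElt X Y 1 = (hElt X Y (-1))⁻¹ := by
  rw [hElt, ← R.w_inv, _root_.mul_inv_rev, inv_inv]

lemma RootLift.bruhat_w [Fintype K] (R : RootLift π X Y)
    (hc : π.ker ≤ center E) (hchar : ringChar K ≠ 2) {x : SpecialLinearGroup (Fin 2) K}
    (hx : x.1 = !![0, 1; -1, 0]) (g : SpecialLinearGroup (Fin 2) K) :
    bruhat X Y (x * g) = wElt X Y 1 * bruhat X Y g := by
  have hm : ∀ {a b : K}, a ≠ 0 → b ≠ 0 → hElt X Y (a * b) = hElt X Y a * hElt X Y b :=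
    fun ha hb => R.h_mul hc hchar ha hb
  have hm1 : (-1 : K) ≠ 0 := neg_ne_zero.2 one_ne_zero
  have hinv : (hElt X Y (-1 : K))⁻¹ = hElt X Y (-1) := by
    rw [inv_eq_iff_mul_eq_one, ← hm hm1 hm1, neg_mul_neg, one_mul, RootLift.h_one]
  have hwsq := R.w_sq
  rw [hinv] at hwsq
  have hwH : ∀ b : K, wElt X Y b = hElt X Y b * wElt X Y 1 := fun b => by rw [hElt]; group
  have hwh : ∀ {b : K}, b ≠ 0 → wElt X Y 1 * hElt X Y b = hElt X Y b⁻¹ * wElt X Y 1 :=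
    fun {b} hb => by rw [← R.w_conj_h hb]; group
  obtain ⟨a, b, c, d, hg, hdet⟩ := SL2_exists_entries g
  have hxg : (x * g).1 = !![c, d; -a, -b] := by
    change x.1 * g.1 = _
    rw [hx, hg, mul_fin_two]; simp
  by_cases hc0 : c = 0
  · subst hc0
    have ha : a ≠ 0 := by rintro rfl; simp at hdet
    rw [bruhat_of_ne hxg (neg_ne_zero.2 ha), bruhat_of_eq hg, zero_div, R.X_zero, one_mul,
      inv_neg, neg_neg, neg_div_neg_eq, hwH a⁻¹, ← hwh ha]
    have h1 : a * b = a ^ 2 * (b / a) := by field_simp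
    rw [h1, ← R.h_X ha]; group
  by_cases ha : a = 0
  · subst ha
    rw [neg_zero] at hxg
    rw [bruhat_of_eq hxg, bruhat_of_ne hg hc0, zero_div, R.X_zero, one_mul]
    have h1 : wElt X Y 1 * wElt X Y (-c⁻¹) = hElt X Y c := by
      have hc1 : -c⁻¹ ≠ 0 := neg_ne_zero.2 (inv_ne_zero hc0)
      rw [hwH (-c⁻¹), ← mul_assoc, hwh hc1, mul_assoc, hwsq, ← hm (inv_ne_zero hc1) hm1]
      congr 1
      field_simp; try ring
    rw [← mul_assoc, h1, R.h_X hc0]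
    congr 2
    field_simp
  · rw [bruhat_of_ne hxg (neg_ne_zero.2 ha), bruhat_of_ne hg hc0]
    have ht : a / c ≠ 0 := div_ne_zero ha hc0
    have hc1 : -c⁻¹ ≠ 0 := neg_ne_zero.2 (inv_ne_zero hc0)
    have e1 : X (a / c) = Y (c / a) * wElt X Y (a / c) * Y (c / a) := by
      rw [R.w_eq ht, R.Y_neg, inv_div]; group
    have e2 : wElt X Y 1 * Y (c / a) = X (-(c / a)) * wElt X Y 1 := by
      have := R.wY 1 (c / a) _ one_ne_zero (R.w_ov one_ne_zero)
      rw [one_pow, one_mul] at this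
      rw [← this]; group
    have e3 : Y (c / a) * wElt X Y (-c⁻¹) = wElt X Y (-c⁻¹) * X (-(a * c)⁻¹) := by
      have := R.wY c⁻¹ (c / a) _ (inv_ne_zero hc0) (R.w_ov (inv_ne_zero hc0))
      have h' : -((c⁻¹) ^ 2 * (c / a)) = -(a * c)⁻¹ := by field_simp
      rw [h'] at this
      rw [← this, ← R.w_inv]; group
    have e4 : wElt X Y 1 * wElt X Y (a / c) * wElt X Y (-c⁻¹) = wElt X Y a⁻¹ := by
      rw [hwH (a / c), hwH (-c⁻¹), ← mul_assoc (wElt X Y 1), hwh ht, mul_assoc, ← mul_assoc,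
        mul_assoc (hElt X Y (a / c)⁻¹), hwsq, ← mul_assoc, ← hm (inv_ne_zero ht) hm1,
        ← hm (mul_ne_zero (inv_ne_zero ht) hm1) hc1, hwH a⁻¹]
      congr 2
      field_simp
    have h5 : -(a * c)⁻¹ + d / c = b / a := by field_simp; linear_combination hdet
    calc _ = X (-(c / a)) * wElt X Y a⁻¹ * X (b / a) := by
            rw [div_neg, inv_neg, neg_neg, neg_div_neg_eq]
      _ = X (-(c / a)) * (wElt X Y 1 * wElt X Y (a / c) * wElt X Y (-c⁻¹)) *
            (X (-(a * c)⁻¹) * X (d / c)) := by rw [e4, ← R.X_add, h5]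
      _ = (wElt X Y 1 * Y (c / a)) * wElt X Y (a / c) * (Y (c / a) * wElt X Y (-c⁻¹)) *
            X (d / c) := by rw [e2, e3]; group
      _ = _ := by rw [e1]; group

/-- The Bruhat section is a homomorphism. -/
lemma RootLift.bruhat_mul [Fintype K] (R : RootLift π X Y)
    (hc : π.ker ≤ center E) (hchar : ringChar K ≠ 2) (A B : SpecialLinearGroup (Fin 2) K) :
    bruhat X Y (A * B) = bruhat X Y A * bruhat X Y B := by
  let P : SpecialLinearGroup (Fin 2) K → Prop :=
    fun A => ∀ B, bruhat X Y (A * B) = bruhat X Y A * bruhat X Y B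
  have hone : bruhat X Y (1 : SpecialLinearGroup (Fin 2) K) = 1 := by
    rw [bruhat_of_eq (a := 1) (b := 0) (d := 1) one_fin_two, mul_zero, R.X_zero, RootLift.h_one,
      one_mul]
  have hmul : ∀ A B, P A → P B → P (A * B) := fun A B hA hB C => by
    rw [mul_assoc, hA, hB, hA, mul_assoc]
  have hinv : ∀ A, P A → P A⁻¹ := fun A hA B => by
    have h1 : ∀ B, bruhat X Y (A⁻¹ * B) = (bruhat X Y A)⁻¹ * bruhat X Y B := fun B => by
      have := hA (A⁻¹ * B)
      rw [mul_inv_cancel_left] at this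
      rw [this]; group
    have h2 := h1 1
    rw [mul_one, hone, mul_one] at h2
    rw [h1, h2]
  have hleft : ∀ A e, (∀ B, bruhat X Y (A * B) = e * bruhat X Y B) → P A := fun A e h B => by
    have h1 := h 1
    rw [mul_one, hone, mul_one] at h1
    rw [h, h1]
  let w : SpecialLinearGroup (Fin 2) K := ⟨!![0, 1; -1, 0], by simp⟩
  have hw : P w := hleft _ _ (R.bruhat_w hc hchar rfl)
  have hxx : ∀ t (x : SpecialLinearGroup (Fin 2) K), x.1 = !![1, t; 0, 1] → P x :=
    fun t x hx => hleft _ _ (R.bruhat_X t hx)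
  have hyy : ∀ t (y : SpecialLinearGroup (Fin 2) K), y.1 = !![1, 0; t, 1] → P y := by
    intro t y hy
    let x : SpecialLinearGroup (Fin 2) K := ⟨!![1, -t; 0, 1], by simp⟩
    have : y = w * x * w⁻¹ := by
      rw [eq_mul_inv_iff_mul_eq]
      apply Subtype.ext
      change y.1 * w.1 = w.1 * x.1
      rw [hy]
      simp [w, x]
    rw [this]
    exact hmul _ _ (hmul _ _ hw (hxx (-t) x rfl)) (hinv _ hw)
  refine SL2.transvection_induction P (fun i j hij t => ?_) hmul A B
  have hco : (SpecialLinearGroup.transvection hij t).1 = 1 + single i j t := rfl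
  fin_cases i <;> fin_cases j
  · exact absurd rfl hij
  · apply hxx t
    rw [hco]
    ext i j; fin_cases i <;> fin_cases j <;> simp
  · apply hyy t
    rw [hco]
    ext i j; fin_cases i <;> fin_cases j <;> simp
  · exact absurd rfl hij

end SL2

/-- `SL₂(K)` is superperfect for a finite field `K` of odd order different from `3` and `9`. -/
theorem superPerfect_SL2 {K : Type u} [Field K] [Fintype K] (hodd : Odd (Fintype.card K))
    (h3 : Fintype.card K ≠ 3) (h9 : Fintype.card K ≠ 9) :
    SuperPerfect (SpecialLinearGroup (Fin 2) K) := by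
  have hgt : 3 < Fintype.card K := by
    have := Fintype.one_lt_card (α := K)
    obtain ⟨k, hk⟩ := hodd
    omega
  have hchar : ringChar K ≠ 2 := fun h => by
    rw [← Nat.not_even_iff_odd] at hodd
    exact hodd (Nat.even_iff.2 ((FiniteField.even_card_iff_char_two (F := K)).1 h))
  obtain ⟨a, ha, ha1⟩ := exists_sq_ne_one hgt
  refine ⟨SL2.commutator_eq_top ha ha1, fun E _ π hs hc => ?_⟩
  obtain ⟨X, Y, R⟩ := exists_rootLift hs hc hodd h3 h9 ha ha1
  exact ⟨MonoidHom.mk' (bruhat X Y) (R.bruhat_mul hc hchar), R.bruhat_ov⟩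

end SymplecticStabilizer

/-! ### Symplectic spaces and transvections -/

namespace SymplecticStabilizer

universe u

open Subgroup

section Symplectic

variable {K : Type*} [Field K] {V : Type*} [AddCommGroup V] [Module K V]

/-- An alternating nondegenerate bilinear form. -/
structure IsSymplectic (B : V →ₗ[K] V →ₗ[K] K) : Prop where
  alt : ∀ x, B x x = 0
  nondeg : ∀ x, (∀ y, B x y = 0) → x = 0

/-- The isometry group of a bilinear form. -/
def Sp (B : V →ₗ[K] V →ₗ[K] K) : Subgroup (V ≃ₗ[K] V) where
  carrier := {g | ∀ x y, B (g x) (g y) = B x y}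
  one_mem' := fun _ _ => rfl
  mul_mem' := fun {g h} hg hh x y => (hg (h x) (h y)).trans (hh x y)
  inv_mem' := fun {g} hg x y => by
    have h1 := hg (g⁻¹ x) (g⁻¹ y)
    have h2 : ∀ z, g (g⁻¹ z) = z := fun z => g.apply_symm_apply z
    rw [h2, h2] at h1
    exact h1.symm

variable {B : V →ₗ[K] V →ₗ[K] K}

lemma Sp.form (g : Sp B) (x y : V) : B (g • x) (g • y) = B x y := g.2 x y

lemma Sp.smul_scalar (g : Sp B) (c : K) (x : V) : g • (c • x) = c • g • x := map_smul g.1 c x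

lemma Sp.ext {g h : Sp B} (H : ∀ x : V, g • x = h • x) : g = h :=
  Subtype.ext (LinearEquiv.ext H)

lemma Sp.smul_ne_zero (g : Sp B) {x : V} (hx : x ≠ 0) : g • x ≠ 0 := by
  intro h
  apply hx
  rw [← inv_smul_smul g x, h, smul_zero]

lemma IsSymplectic.neg (hB : IsSymplectic B) (x y : V) : B y x = -B x y := by
  have h := hB.alt (x + y)
  simp only [map_add, LinearMap.add_apply, hB.alt, zero_add, add_zero] at h
  exact eq_neg_of_add_eq_zero_left h

lemma IsSymplectic.exists_ne (hB : IsSymplectic B) {x : V} (hx : x ≠ 0) : ∃ y, B x y ≠ 0 := by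
  by_contra! h
  exact hx (hB.nondeg x h)

/-- A linearly independent family can be paired with arbitrary prescribed values. -/
lemma IsSymplectic.exists_prescribed (hB : IsSymplectic B) {ι : Type*} [Fintype ι]
    {f : ι → V} (hf : LinearIndependent K f) (c : ι → K) : ∃ w, ∀ i, B (f i) w = c i := by
  classical
  have h1 : ∀ i, ∃ d, (∀ j, j ≠ i → B (f j) d = 0) ∧ B (f i) d ≠ 0 := by
    intro i
    by_contra! h
    have hmem := mem_span_of_iInf_ker_le_ker (ι := {j // j ≠ i}) (L := fun j => B (f j))
      (K := B (f i)) (by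
        intro d hd
        rw [Submodule.mem_iInf] at hd
        exact h d fun j hj => hd ⟨j, hj⟩)
    have hrange : Set.range (fun j : {j // j ≠ i} => B (f j)) = B '' (f '' {j | j ≠ i}) := by
      ext φ
      constructor
      · rintro ⟨j, rfl⟩
        exact ⟨f j, ⟨j, j.2, rfl⟩, rfl⟩
      · rintro ⟨_, ⟨j, hj, rfl⟩, rfl⟩
        exact ⟨⟨j, hj⟩, rfl⟩
    rw [hrange, ← Submodule.map_span] at hmem
    obtain ⟨v, hv, hvi⟩ := hmem
    have : v = f i := by
      rw [← sub_eq_zero]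
      apply hB.nondeg
      intro y
      rw [map_sub, hvi, sub_self, LinearMap.zero_apply]
    rw [this] at hv
    exact hf.notMem_span_image (s := {j | j ≠ i}) (x := i) (by simp) hv
  choose d hd hd' using h1
  refine ⟨∑ i, (c i / B (f i) (d i)) • d i, fun i => ?_⟩
  rw [map_sum, Finset.sum_eq_single i]
  · rw [map_smul, smul_eq_mul, div_mul_cancel₀ _ (hd' i)]
  · intro j _ hj
    rw [map_smul, hd j i hj.symm, smul_zero]
  · simp

lemma IsSymplectic.exists_prescribed₂ (hB : IsSymplectic B) {x y : V}
    (h : LinearIndependent K ![x, y]) (a b : K) : ∃ w, B x w = a ∧ B y w = b := by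
  obtain ⟨w, hw⟩ := hB.exists_prescribed h ![a, b]
  exact ⟨w, hw 0, hw 1⟩

lemma linearIndependent_triple {x y z : V} (h : LinearIndependent K ![x, y])
    (hz : z ∉ Submodule.span K {x, y}) : LinearIndependent K ![z, x, y] := by
  have := linearIndependent_finCons (K := K) (x := z) (v := ![x, y])
  rw [Matrix.range_cons_cons_empty] at this
  exact this.2 ⟨h, hz⟩

lemma IsSymplectic.exists_prescribed₃ (hB : IsSymplectic B) {x y z : V}
    (h : LinearIndependent K ![x, y]) (hz : z ∉ Submodule.span K {x, y}) (a b c : K) :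
    ∃ w, B x w = a ∧ B y w = b ∧ B z w = c := by
  obtain ⟨w, hw⟩ := hB.exists_prescribed (linearIndependent_triple h hz) ![c, a, b]
  exact ⟨w, hw 1, hw 2, hw 0⟩

/-- Independence of a pair, in the form in which it is checked below. -/
lemma pair_indep {x y : V} (hy : y ≠ 0) (h : ∀ c : K, x ≠ c • y) :
    LinearIndependent K ![x, y] := by
  have := linearIndependent_finCons (K := K) (x := x) (v := ![y])
  rw [Matrix.range_cons, Matrix.range_empty, Set.union_empty] at this
  refine this.2 ⟨?_, ?_⟩
  · rw [linearIndependent_unique_iff]; exact hy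
  · intro hx
    obtain ⟨c, hc⟩ := Submodule.mem_span_singleton.1 hx
    exact h c hc.symm

/-- A vector orthogonal to two others and not to a third one outside their span. -/
lemma IsSymplectic.exists_orth (hB : IsSymplectic B) {x y z : V}
    (hz : z ∉ Submodule.span K {x, y}) : ∃ d, B x d = 0 ∧ B y d = 0 ∧ B z d ≠ 0 := by
  by_contra! h
  have hmem := mem_span_of_iInf_ker_le_ker (L := fun j => B (![x, y] j)) (K := B z) (by
        intro d hd
        rw [Submodule.mem_iInf] at hd
        exact h d (hd 0) (hd 1))
  have hrange : Set.range (fun j : Fin 2 => B (![x, y] j)) = B '' {x, y} := by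
    rw [← Matrix.range_cons_cons_empty x y ![], ← Set.range_comp]; rfl
  rw [hrange, ← Submodule.map_span] at hmem
  obtain ⟨v, hv, hvi⟩ := hmem
  have : v = z := by
    rw [← sub_eq_zero]
    apply hB.nondeg
    intro y
    rw [map_sub, hvi, sub_self, LinearMap.zero_apply]
  exact hz (this ▸ hv)

/-! ### Transvections -/

/-- The symplectic transvection `u ↦ u + c B(x, u) x`. -/
def tv (hB : IsSymplectic B) (x : V) (c : K) : Sp B :=
  ⟨{ toFun := fun u => u + (c * B x u) • x
     invFun := fun u => u - (c * B x u) • x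
     map_add' := fun u v => by rw [map_add, mul_add, add_smul]; abel
     map_smul' := fun a u => by
       rw [map_smul, smul_eq_mul, RingHom.id_apply, smul_add, smul_smul]; congr 2; ring
     left_inv := fun u => by simp [hB.alt]
     right_inv := fun u => by simp [hB.alt] },
   fun u v => by
     simp only [LinearEquiv.coe_mk, LinearMap.coe_mk, AddHom.coe_mk, map_add, map_smul,
       LinearMap.add_apply, LinearMap.smul_apply, hB.alt, hB.neg x u, smul_eq_mul]
     ring⟩

lemma tv_smul (hB : IsSymplectic B) (x : V) (c : K) (u : V) :
    tv hB x c • u = u + (c * B x u) • x := rfl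

lemma tv_fix (hB : IsSymplectic B) {x u : V} (h : B x u = 0) (c : K) : tv hB x c • u = u := by
  rw [tv_smul, h, mul_zero, zero_smul, add_zero]

lemma tv_mul (hB : IsSymplectic B) (x : V) (c d : K) :
    tv hB x c * tv hB x d = tv hB x (c + d) := by
  apply Sp.ext
  intro u
  rw [mul_smul, tv_smul, tv_smul, tv_smul, map_add, map_smul, hB.alt, smul_zero, add_zero,
    add_assoc, ← add_smul]
  congr 2
  ring

lemma tv_conj (hB : IsSymplectic B) (g : Sp B) (x : V) (c : K) :
    g * tv hB x c * g⁻¹ = tv hB (g • x) c := by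
  apply Sp.ext
  intro u
  rw [mul_smul, mul_smul, tv_smul, tv_smul, smul_add, smul_inv_smul, Sp.smul_scalar,
    ← Sp.form g x, smul_inv_smul]

lemma tv_scale (hB : IsSymplectic B) (x : V) (a c : K) :
    tv hB (a • x) c = tv hB x (a ^ 2 * c) := by
  apply Sp.ext
  intro u
  rw [tv_smul, tv_smul, map_smul, LinearMap.smul_apply, smul_smul, smul_eq_mul]
  congr 2
  ring

/-- The transvection along `v' - v` moving `v` to `v'`. -/
lemma tv_move (hB : IsSymplectic B) {v v' : V} (h : B v v' ≠ 0) :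
    tv hB (v' - v) (-(B v v')⁻¹) • v = v' := by
  rw [tv_smul, map_sub, LinearMap.sub_apply, hB.alt, hB.neg v v', sub_zero, neg_mul_neg,
    inv_mul_cancel₀ h, one_smul, add_sub_cancel]

/-- A vector not orthogonal to two given nonzero functionals. -/
lemma exists_ne_ne {S : Type*} [AddCommGroup S] (f g : S →+ K) {y z : S} (hy : f y ≠ 0)
    (hz : g z ≠ 0) : ∃ w, f w ≠ 0 ∧ g w ≠ 0 ∧ (w = y ∨ w = z ∨ w = y + z) := by
  by_cases h1 : g y = 0
  · by_cases h2 : f z = 0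
    · exact ⟨y + z, by simpa [h2], by simpa [h1], by simp⟩
    · exact ⟨z, h2, hz, by simp⟩
  · exact ⟨y, hy, h1, by simp⟩

/-- Transvections act transitively on nonzero vectors. -/
lemma exists_move (hB : IsSymplectic B) (C : Subgroup (Sp B))
    (hC : ∀ x c, x ≠ 0 → tv hB x c ∈ C) {v v' : V} (hv : v ≠ 0) (hv' : v' ≠ 0) :
    ∃ h ∈ C, h • v = v' := by
  have key : ∀ {v v' : V}, B v v' ≠ 0 → ∃ h ∈ C, h • v = v' := by
    intro v v' h
    refine ⟨_, hC _ _ ?_, tv_move hB h⟩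
    intro h0
    rw [sub_eq_zero.1 h0, hB.alt] at h
    exact h rfl
  obtain ⟨y, hy⟩ := hB.exists_ne hv
  obtain ⟨z, hz⟩ := hB.exists_ne hv'
  obtain ⟨w, hw, hw', -⟩ := exists_ne_ne (B v).toAddMonoidHom (B v').toAddMonoidHom hy hz
  obtain ⟨h₁, hh₁, e₁⟩ := key (v := v) (v' := w) hw
  obtain ⟨h₂, hh₂, e₂⟩ := key (v := w) (v' := v') (by rw [hB.neg]; exact neg_ne_zero.2 hw')
  exact ⟨h₂ * h₁, C.mul_mem hh₂ hh₁, by rw [mul_smul, e₁, e₂]⟩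

/-- The symplectic group acts transitively on hyperbolic pairs. -/
lemma exists_move_pair (hB : IsSymplectic B) {v w v' w' : V} (h : B v w = 1) (h' : B v' w' = 1) :
    ∃ g : Sp B, g • v = v' ∧ g • w = w' := by
  have hne : ∀ {v w : V}, B v w = 1 → v ≠ 0 := by
    rintro v w h rfl
    simp at h
  obtain ⟨g, -, hg⟩ := exists_move hB ⊤ (fun _ _ _ => mem_top _) (hne h) (hne h')
  have key : ∀ {u u' : V}, B v' u = 1 → B v' u' = 1 → B u u' ≠ 0 →
      ∃ k : Sp B, k • v' = v' ∧ k • u = u' := by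
    intro u u' hu hu' huu
    refine ⟨_, tv_fix hB ?_ _, tv_move hB huu⟩
    rw [hB.neg, map_sub, hu, hu', sub_self, neg_zero]
  have hgw : B v' (g • w) = 1 := by rw [← hg, Sp.form, h]
  have key2 : ∃ k : Sp B, k • v' = v' ∧ k • (g • w) = w' := by
    by_cases h0 : B (g • w) w' = 0
    · obtain ⟨k₁, e₁, f₁⟩ := key (u := g • w) (u' := g • w + v') hgw
        (by rw [map_add, hgw, hB.alt, add_zero])
        (by rw [map_add, hB.alt, zero_add, hB.neg, hgw]; simp)
      obtain ⟨k₂, e₂, f₂⟩ := key (u := g • w + v') (u' := w')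
        (by rw [map_add, hgw, hB.alt, add_zero]) h'
        (by rw [map_add, LinearMap.add_apply, h0, zero_add, h']; exact one_ne_zero)
      exact ⟨k₂ * k₁, by rw [mul_smul, e₁, e₂], by rw [mul_smul, f₁, f₂]⟩
    · exact key hgw h' h0
  obtain ⟨k, hk, hkw⟩ := key2
  exact ⟨k * g, by rw [mul_smul, hg, hk], by rw [mul_smul, hkw]⟩

/-- The isometry scaling a hyperbolic pair `x, y` by `a, a⁻¹` and fixing the orthogonal
complement. -/
lemma exists_hyperbolic (hB : IsSymplectic B) {x y : V} (h : B x y = 1) {a : K} (ha : a ≠ 0) :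
    ∃ g : Sp B, g • x = a • x ∧ ∀ w, B x w = 0 → B y w = 0 → g • w = w := by
  have h' : B y x = -1 := by rw [hB.neg, h]
  have key : ∀ (a b : K), a * b = 1 → ∀ u : V,
      (u - ((a - 1) * B y u) • x + ((b - 1) * B x u) • y) -
        ((b - 1) * B y (u - ((a - 1) * B y u) • x + ((b - 1) * B x u) • y)) • x +
        ((a - 1) * B x (u - ((a - 1) * B y u) • x + ((b - 1) * B x u) • y)) • y = u := by
    intro a b hab u
    simp only [map_add, map_sub, map_smul, hB.alt, h, h', smul_eq_mul]
    have e : u - ((a - 1) * B y u) • x + ((b - 1) * B x u) • y -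
        ((b - 1) * (B y u - (a - 1) * B y u * -1 + (b - 1) * B x u * 0)) • x +
        ((a - 1) * (B x u - (a - 1) * B y u * 0 + (b - 1) * B x u * 1)) • y =
        u + ((1 - a * b) * B y u) • x + ((a * b - 1) * B x u) • y := by module
    rw [e, hab]; simp
  have hab : a * a⁻¹ = 1 := mul_inv_cancel₀ ha
  refine ⟨⟨{ toFun := fun u => u - ((a - 1) * B y u) • x + ((a⁻¹ - 1) * B x u) • y
             invFun := fun u => u - ((a⁻¹ - 1) * B y u) • x + ((a - 1) * B x u) • y
             map_add' := fun u v => by simp only [map_add]; module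
             map_smul' := fun c u => by
               simp only [map_smul, smul_eq_mul, RingHom.id_apply]; module
             left_inv := key a a⁻¹ hab
             right_inv := key a⁻¹ a (by rw [mul_comm, hab]) },
           fun u v => ?_⟩, ?_, ?_⟩
  · simp only [LinearEquiv.coe_mk, LinearMap.coe_mk, AddHom.coe_mk, map_add, map_sub, map_smul,
       LinearMap.add_apply, LinearMap.sub_apply, LinearMap.smul_apply, hB.alt, hB.neg x u,
       hB.neg y u, smul_eq_mul, h, h']
    linear_combination (B x u * B y v - B y u * B x v) * hab
  · change x - ((a - 1) * B y x) • x + ((a⁻¹ - 1) * B x x) • y = a • x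
    rw [hB.alt, h']; module
  · intro w hx hy
    change w - ((a - 1) * B y w) • x + ((a⁻¹ - 1) * B x w) • y = w
    rw [hx, hy]; simp

end Symplectic

end SymplecticStabilizer

/-! ### Extensions of symplectic groups by Heisenberg groups -/

namespace SymplecticStabilizer

universe u

open Subgroup

section Factor

variable {K : Type*} [Field K] {W : Type*} [AddCommGroup W] [Module K W]
  {β : W →ₗ[K] W →ₗ[K] K}

/-- A biadditive map invariant under the symplectic group factors through the symplectic form:
transvections kill it on orthogonal pairs, and the group is transitive on hyperbolic pairs. -/
lemma invariant_factor (hβ : IsSymplectic β) {A : Type*} [AddCommGroup A] (ψ : W →+ W →+ A)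
    (hψ : ∀ (g : Sp β) x y, ψ (g • x) (g • y) = ψ x y) {x₀ y₀ : W} (h₀ : β x₀ y₀ = 1)
    (x x' : W) : ψ x x' = ψ x₀ (β x x' • y₀) := by
  by_cases hc : β x x' = 0
  · rw [hc, zero_smul, map_zero]
    by_cases hx : x = 0
    · rw [hx, map_zero, AddMonoidHom.zero_apply]
    obtain ⟨y, hy⟩ := hβ.exists_ne hx
    have h1 := hψ (tv hβ x (β x y)⁻¹) y x'
    rw [tv_fix hβ hc, tv_smul, inv_mul_cancel₀ hy, one_smul, map_add, AddMonoidHom.add_apply] at h1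
    exact left_eq_add.1 h1.symm
  · obtain ⟨g, hg, hg'⟩ := exists_move_pair hβ h₀ (v' := x) (w' := (β x x')⁻¹ • x')
      (by rw [map_smul, smul_eq_mul, inv_mul_cancel₀ hc])
    rw [← hψ g x₀, Sp.smul_scalar, hg, hg', smul_smul, mul_inv_cancel₀ hc, one_smul]

/-- The isometry `-1`. -/
def negSp (β : W →ₗ[K] W →ₗ[K] K) : Sp β :=
  ⟨LinearEquiv.neg K, fun x y => by simp⟩

lemma negSp_smul (x : W) : negSp β • x = -x := rfl

lemma negSp_conj (g : Sp β) : g * negSp β * g⁻¹ = negSp β := by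
  apply Sp.ext
  intro x
  rw [mul_smul, mul_smul, negSp_smul, negSp_smul, smul_neg, smul_inv_smul]

/-- A decomposition of `G` as the semidirect product of the Heisenberg group of `β`, with
elements `η x z`, by the symplectic group of `β`, with elements `m g`. -/
structure Jacobi (β : W →ₗ[K] W →ₗ[K] K) (G : Type*) [Group G] where
  m : Sp β →* G
  η : W → K → G
  mul : ∀ x z x' z', η x z * η x' z' = η (x + x') (z + z' + β x x')
  conj : ∀ g x z, m g * η x z * (m g)⁻¹ = η (g • x) z
  dec : ∀ k, ∃ p : W × K × Sp β, k = η p.1 p.2.1 * m p.2.2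
  inj : ∀ x z g x' z' g', η x z * m g = η x' z' * m g' → x = x' ∧ z = z' ∧ g = g'

namespace Jacobi

variable {G : Type*} [Group G] (J : Jacobi β G)

lemma zero : J.η 0 0 = 1 := by
  have := J.mul 0 0 0 0
  rw [map_zero, add_zero, add_zero, add_zero] at this
  exact mul_eq_left.1 this

lemma inv (hβ : IsSymplectic β) (x : W) (z : K) : (J.η x z)⁻¹ = J.η (-x) (-z) := by
  rw [inv_eq_iff_mul_eq_one, J.mul, map_neg, hβ.alt, add_neg_cancel, add_neg_cancel, neg_zero,
    add_zero, J.zero]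

lemma comm_neg (hβ : IsSymplectic β) (y : W) :
    J.m (negSp β) * J.η y 0 * (J.m (negSp β))⁻¹ * (J.η y 0)⁻¹ = J.η (-(y + y)) 0 := by
  rw [J.conj, negSp_smul, J.inv hβ, J.mul, neg_zero, map_neg, map_neg, LinearMap.neg_apply,
    hβ.alt, neg_zero, neg_zero, add_zero, add_zero, neg_add]

lemma comm_η (hβ : IsSymplectic β) (x y : W) :
    J.η x 0 * J.η y 0 * (J.η x 0)⁻¹ * (J.η y 0)⁻¹ = J.η 0 (2 * β x y) := by
  rw [J.inv hβ, J.inv hβ, J.mul, J.mul, J.mul]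
  congr 1
  · abel
  · simp only [map_add, map_neg, LinearMap.add_apply, LinearMap.neg_apply, hβ.alt, hβ.neg x y]
    ring

lemma η_central (z : K) : J.η 0 z ∈ center G := by
  rw [mem_center_iff]
  intro k
  obtain ⟨⟨x, z', g⟩, rfl⟩ := J.dec k
  have h1 : J.m g * J.η 0 z = J.η 0 z * J.m g := by
    have := J.conj g 0 z
    rw [smul_zero] at this
    exact mul_inv_eq_iff_eq_mul.1 this
  simp only
  rw [mul_assoc, h1, ← mul_assoc, J.mul, ← mul_assoc, J.mul]
  congr 2
  · abel
  · simp only [map_zero, LinearMap.zero_apply]; ring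

lemma perfect {G : Type*} [Group G] (J : Jacobi β G) (hβ : IsSymplectic β) (h2 : (2 : K) ≠ 0) [Nontrivial W]
    (hSp : commutator (Sp β) = ⊤) : commutator G = ⊤ := by
  have hcomm : ∀ a b : G, a * b * a⁻¹ * b⁻¹ ∈ commutator G := fun a b =>
    commutator_mem_commutator (mem_top a) (mem_top b)
  have e1 : ∀ x, J.η x 0 ∈ commutator G := by
    intro x
    have := hcomm (J.m (negSp β)) (J.η (-((2 : K)⁻¹ • x)) 0)
    rw [J.comm_neg hβ] at this
    convert this using 2
    rw [neg_add_rev, neg_neg, ← two_smul K, smul_smul, mul_inv_cancel₀ h2, one_smul]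
  have e2 : ∀ z, J.η 0 z ∈ commutator G := by
    intro z
    obtain ⟨x, hx⟩ := exists_ne (0 : W)
    obtain ⟨y, hy⟩ := hβ.exists_ne hx
    have := hcomm (J.η x 0) (J.η ((z / 2 / β x y) • y) 0)
    rw [J.comm_η hβ, map_smul, smul_eq_mul, div_mul_cancel₀ _ hy, mul_div_cancel₀ _ h2] at this
    exact this
  rw [eq_top_iff]
  rintro k -
  obtain ⟨⟨x, z, g⟩, rfl⟩ := J.dec k
  have e3 : J.η x z = J.η x 0 * J.η 0 z := by
    rw [J.mul, map_zero]; congr 1 <;> abel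
  exact mul_mem (e3 ▸ mul_mem (e1 x) (e2 z)) (apply_mem_commutator hSp J.m g)

end Jacobi

end Factor

section Split

lemma sq_defect {E : Type*} [Group E] {a b c ε : E} (hμ : c⁻¹ * (a * b) ∈ center E)
    (ea : ε * a * ε⁻¹ = a⁻¹) (eb : ε * b * ε⁻¹ = b⁻¹) (ec : ε * c * ε⁻¹ = c⁻¹) :
    c⁻¹ * (a * b) * (c⁻¹ * (a * b)) = a * b * a⁻¹ * b⁻¹ := by
  have h1 := mem_center_iff.1 hμ ε
  have h2 := mem_center_iff.1 hμ c
  have h3 : ε * (c⁻¹ * (a * b)) * ε⁻¹ = c * (a⁻¹ * b⁻¹) := by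
    calc ε * (c⁻¹ * (a * b)) * ε⁻¹
        = (ε * c * ε⁻¹)⁻¹ * ((ε * a * ε⁻¹) * (ε * b * ε⁻¹)) := by group
      _ = _ := by rw [ea, eb, ec, inv_inv]
  rw [h1, mul_inv_cancel_right] at h3
  calc c⁻¹ * (a * b) * (c⁻¹ * (a * b)) = c⁻¹ * (a * b) * (c * (a⁻¹ * b⁻¹)) := by rw [h3]
    _ = (c⁻¹ * (a * b) * c) * (a⁻¹ * b⁻¹) := by group
    _ = (c * (c⁻¹ * (a * b))) * (a⁻¹ * b⁻¹) := by rw [h2]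
    _ = _ := by group

lemma double_mul {E : Type*} [Group E] {a b c μ : E} (hμ : μ ∈ center E) (h : a * b = c * μ)
    (h' : a * b * a⁻¹ * b⁻¹ = μ * μ) : a * a * (b * b) = c * c * ((μ * μ) * (μ * μ)) := by
  have hc := mem_center_iff.1 hμ
  have hcc := mem_center_iff.1 (mul_mem hμ hμ)
  calc a * a * (b * b) = a * (a * b * a⁻¹ * b⁻¹) * (b * (a * b)) := by group
    _ = (μ * μ) * ((a * b) * (a * b)) := by rw [h', hcc]; group
    _ = c * (μ * c) * μ * (μ * μ) := by rw [h, ← hcc]; group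
    _ = _ := by rw [← hc]; group

lemma section_mul {E : Type*} [Group E] {a b c g g' z z' p : E} (hz : z ∈ center E)
    (hz' : z' ∈ center E) (hp : p ∈ center E) (h : a * (g * b * g⁻¹) = c * p) :
    a * z * g * (b * z' * g') = c * (z * z' * p) * (g * g') := by
  have h1 := mem_center_iff.1 hz
  have h2 := mem_center_iff.1 hz'
  have h3 := mem_center_iff.1 hp
  calc a * z * g * (b * z' * g') = a * (z * (g * b * g⁻¹)) * (g * z') * g' := by group
    _ = (a * (g * b * g⁻¹)) * z * (z' * g) * g' := by rw [← h1, h2]; group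
    _ = c * (p * (z * z')) * (g * g') := by rw [h]; group
    _ = _ := by rw [← h3]

variable {K : Type u} [Field K] {W : Type u} [AddCommGroup W] [Module K W]
  {β : W →ₗ[K] W →ₗ[K] K}

/-- A semidirect product of a Heisenberg group by a superperfect symplectic group is
superperfect.  In a central extension the lift `ε` of `-1` singles out lifts of the Heisenberg
elements `η x 0` up to a bimultiplicative cocycle; this cocycle is invariant under the
symplectic group, hence factors through the symplectic form, and this is what is needed to
define a section. -/
theorem Jacobi.superPerfect {G : Type u} [Group G] (J : Jacobi β G) (hβ : IsSymplectic β)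
    (h2 : (2 : K) ≠ 0) [Nontrivial W] (hSp : SuperPerfect (Sp β)) : SuperPerfect G where
  perfect := J.perfect hβ h2 hSp.perfect
  split E _ π hs hc := by
    obtain ⟨s, hs'⟩ := hSp.lift π hs hc J.m
    choose r hr using hs
    have hcen : ∀ {u : E} {z : K}, π u = J.η 0 z → u ∈ center E := fun {u z} h =>
      mem_center_of_map_mem_center (J.perfect hβ h2 hSp.perfect) π (fun g => ⟨r g, hr g⟩) hc
        (h ▸ J.η_central z)
    set ε := s (negSp β) with hε
    have hhalf : ∀ x : W, (2 : K)⁻¹ • x + (2 : K)⁻¹ • x = x := fun x => by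
      rw [← two_smul K, smul_smul, mul_inv_cancel₀ h2, one_smul]
    let lam : W → E := fun x =>
      ε * r (J.η (-((2 : K)⁻¹ • x)) 0) * ε⁻¹ * (r (J.η (-((2 : K)⁻¹ • x)) 0))⁻¹
    have lam_eq : ∀ x u, π u = J.η (-((2 : K)⁻¹ • x)) 0 → ε * u * ε⁻¹ * u⁻¹ = lam x :=
      fun x u h => comm_eq_of_map_eq π hc rfl (h.trans (hr _).symm)
    have lam_map : ∀ x, π (lam x) = J.η x 0 := fun x => by
      simp only [lam, map_mul, map_inv, hr, hε, hs', J.comm_neg hβ]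
      rw [neg_add_rev, neg_neg, hhalf]
    have lam_conj : ∀ (g : Sp β) x, s g * lam x * (s g)⁻¹ = lam (g • x) := fun g x => by
      have h1 : s g * ε * (s g)⁻¹ = ε := by
        rw [hε, ← map_inv, ← map_mul, ← map_mul, negSp_conj]
      rw [← lam_eq (g • x) (s g * r (J.η (-((2 : K)⁻¹ • x)) 0) * (s g)⁻¹)
        (by rw [map_mul, map_mul, map_inv, hs', hr, J.conj, smul_neg, Sp.smul_scalar])]
      conv_rhs => rw [← h1]
      simp only [lam]
      group
    have hL : ∀ x y, (lam x * lam y)⁻¹ * lam (x + y) ∈ center E := fun x y => by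
      refine hcen (z := -β x y) ?_
      rw [map_mul, map_inv, map_mul, lam_map, lam_map, lam_map, J.mul, J.inv hβ, J.mul, map_neg,
        LinearMap.neg_apply, hβ.alt]
      congr 1 <;> simp
    let ψ := commPairing lam hL
    have ψ_coe : ∀ x y, ((ψ x y).toMul : E) = lam x * lam y * (lam x)⁻¹ * (lam y)⁻¹ :=
      fun _ _ => rfl
    have ψ_inv : ∀ (g : Sp β) x y, ψ (g • x) (g • y) = ψ x y := fun g x y => by
      apply Additive.toMul.injective
      apply Subtype.ext
      have h1 := mem_center_iff.1 (ψ x y).toMul.2 (s g)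
      rw [ψ_coe, ← lam_conj, ← lam_conj]
      rw [← mul_inv_eq_iff_eq_mul, ψ_coe] at h1
      rw [ψ_coe, ← h1]
      group
    have lam_neg : ∀ x, lam (-x) = (lam x)⁻¹ := fun x => by
      have h1 : lam (-x) = ε * (lam (-((2 : K)⁻¹ • x)))⁻¹ * ε⁻¹ * lam (-((2 : K)⁻¹ • x)) := by
        rw [← lam_eq (-x) (lam (-((2 : K)⁻¹ • x)))⁻¹ (by
          rw [map_inv, lam_map, J.inv hβ]; simp), inv_inv]
      have h3 := lam_eq x (lam (-((2 : K)⁻¹ • x))) (lam_map _)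
      have h2 : ψ (-((2 : K)⁻¹ • x)) (-x) = 0 := by
        conv_lhs => rw [← hhalf x]
        rw [neg_add, ← smul_neg, hhalf, ← smul_neg]
        rw [map_add]
        exact (congrArg₂ (· + ·) (commPairing_self lam hL _) (commPairing_self lam hL _)).trans
          (add_zero _)
      have h4 : lam (-((2 : K)⁻¹ • x)) * lam (-x) * (lam (-((2 : K)⁻¹ • x)))⁻¹ = lam (-x) := by
        have := ψ_coe (-((2 : K)⁻¹ • x)) (-x)
        rw [h2] at this
        exact mul_inv_eq_one.1 this.symm
      rw [← h4, ← h3]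
      conv_lhs => rw [h1]
      group
    -- the defect of additivity of `lam` is a square root of the commutator
    have lam_add : ∀ x y, ∃ μ : center E,
        lam x * lam y = lam (x + y) * μ ∧ μ * μ = (ψ x y).toMul := by
      intro x y
      have hμ : (lam (x + y))⁻¹ * (lam x * lam y) ∈ center E := by
        have := inv_mem (hL x y)
        rwa [mul_inv_rev, inv_inv] at this
      refine ⟨⟨_, hμ⟩, by group, ?_⟩
      have e : ∀ z, ε * lam z * ε⁻¹ = (lam z)⁻¹ := fun z => by
        rw [hε, lam_conj, negSp_smul, lam_neg]
      exact Subtype.ext (sq_defect hμ (e x) (e y) (e (x + y)))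
    let lam' : W → E := fun x => lam ((2 : K)⁻¹ • x) * lam ((2 : K)⁻¹ • x)
    have lam'_map : ∀ x, π (lam' x) = J.η x 0 := fun x => by
      simp only [lam', map_mul, lam_map, J.mul, hhalf, hβ.alt, add_zero]
    have lam'_conj : ∀ (g : Sp β) x, s g * lam' x * (s g)⁻¹ = lam' (g • x) := fun g x => by
      simp only [lam', ← Sp.smul_scalar, ← lam_conj]
      group
    have lam'_mul : ∀ x y, lam' x * lam' y =
        lam' (x + y) * ((ψ x ((2 : K)⁻¹ • y)).toMul : E) := by
      intro x y
      obtain ⟨μ, h1, h3⟩ := lam_add ((2 : K)⁻¹ • x) ((2 : K)⁻¹ • y)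
      rw [← smul_add] at h1
      have h4 := double_mul μ.2 h1 (by rw [← ψ_coe, ← h3]; rfl)
      have h5 : ψ x ((2 : K)⁻¹ • y) = ψ ((2 : K)⁻¹ • x) ((2 : K)⁻¹ • y) +
          ψ ((2 : K)⁻¹ • x) ((2 : K)⁻¹ • y) := by
        rw [← AddMonoidHom.add_apply, ← map_add, hhalf]
      rw [h5, toMul_add, ← h3]
      exact h4
    obtain ⟨x₀, hx₀⟩ := exists_ne (0 : W)
    obtain ⟨y₀, h₀⟩ : ∃ y, β x₀ y = 1 := by
      obtain ⟨y, hy⟩ := hβ.exists_ne hx₀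
      exact ⟨(β x₀ y)⁻¹ • y, by rw [map_smul, smul_eq_mul, inv_mul_cancel₀ hy]⟩
    let ζ : K → center E := fun z => (ψ x₀ ((z / 2) • y₀)).toMul
    have ζ_add : ∀ z z', ζ (z + z') = ζ z * ζ z' := fun z z' => by
      simp only [ζ]
      rw [add_div, add_smul, map_add, toMul_add]
    have ζ_map : ∀ z, π (ζ z) = J.η 0 z := fun z => by
      simp only [ζ, ψ_coe, map_mul, map_inv, lam_map, J.comm_η hβ]
      rw [map_smul, h₀, smul_eq_mul, mul_one, mul_div_cancel₀ _ h2]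
    have ζ_ψ : ∀ x y, (ψ x ((2 : K)⁻¹ • y)).toMul = ζ (β x y) := fun x y => by
      simp only [ζ]
      rw [invariant_factor hβ ψ ψ_inv h₀, (β x).map_smul, smul_eq_mul, inv_mul_eq_div]
    choose d hd using J.dec
    let S : W × K × Sp β → E := fun p => lam' p.1 * ζ p.2.1 * s p.2.2
    have S_map : ∀ p, π (S p) = J.η p.1 p.2.1 * J.m p.2.2 := fun p => by
      simp only [S, map_mul, lam'_map, ζ_map, hs', J.mul, map_zero, add_zero, zero_add]
    have hdd : ∀ p, d (J.η p.1 p.2.1 * J.m p.2.2) = p := fun p => by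
      obtain ⟨h1, h2, h3⟩ := J.inj _ _ _ _ _ _ (hd (J.η p.1 p.2.1 * J.m p.2.2))
      exact Prod.ext h1.symm (Prod.ext h2.symm h3.symm)
    refine ⟨MonoidHom.mk' (fun k => S (d k)) fun k k' => ?_, fun k => by
      rw [MonoidHom.mk'_apply, S_map, ← hd]⟩
    rcases hp : d k with ⟨x, z, g⟩
    rcases hp' : d k' with ⟨x', z', g'⟩
    have hk := hd k
    have hk' := hd k'
    rw [hp] at hk
    rw [hp'] at hk'
    have h1 : k * k' = J.η (x + g • x') (z + z' + β x (g • x')) * J.m (g * g') := by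
      rw [hk, hk', ← J.mul, ← J.conj, map_mul]
      group
    rw [h1, hdd (x + g • x', z + z' + β x (g • x'), g * g')]
    simp only [S]
    rw [ζ_add, ζ_add, map_mul, ← ζ_ψ]
    have h3 := lam'_mul x (g • x')
    rw [← lam'_conj] at h3
    exact (section_mul (ζ z).2 (ζ z').2 (Additive.toMul (ψ x ((2 : K)⁻¹ • (g • x')))).2 h3).symm

end Split

section Hyperbolic

variable {K : Type*} [Field K] {W : Type*} [AddCommGroup W] [Module K W]

/-- The orthogonal sum of a hyperbolic plane and the form `β`. -/
def hypForm (β : W →ₗ[K] W →ₗ[K] K) : (K × K × W) →ₗ[K] (K × K × W) →ₗ[K] K :=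
  LinearMap.mk₂ K (fun x y => x.1 * y.2.1 - x.2.1 * y.1 + β x.2.2 y.2.2)
    (fun x x' y => by simp only [Prod.fst_add, Prod.snd_add, map_add, LinearMap.add_apply]; ring)
    (fun c x y => by
      simp only [Prod.smul_fst, Prod.smul_snd, map_smul, LinearMap.smul_apply, smul_eq_mul]; ring)
    (fun x y y' => by simp only [Prod.fst_add, Prod.snd_add, map_add]; ring)
    (fun c x y => by simp only [Prod.smul_fst, Prod.smul_snd, map_smul, smul_eq_mul]; ring)

variable {β : W →ₗ[K] W →ₗ[K] K}

lemma hypForm_apply (x y : K × K × W) :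
    hypForm β x y = x.1 * y.2.1 - x.2.1 * y.1 + β x.2.2 y.2.2 := rfl

lemma hypForm_isSymplectic (hβ : IsSymplectic β) : IsSymplectic (hypForm β) where
  alt x := by rw [hypForm_apply, hβ.alt]; ring
  nondeg x h := by
    have h1 := h (0, 1, 0)
    have h2 := h (1, 0, 0)
    have h3 : ∀ w, hypForm β x (0, 0, w) = 0 := fun w => h _
    simp only [hypForm_apply, map_zero, mul_zero, mul_one, sub_zero, zero_sub, add_zero, zero_add,
      neg_eq_zero] at h1 h2 h3
    exact Prod.ext h1 (Prod.ext h2 (hβ.nondeg _ h3))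

/-- The symplectic group of `β` acting on the orthogonal sum. -/
def hypEmb (β : W →ₗ[K] W →ₗ[K] K) : Sp β →* Sp (hypForm β) where
  toFun g := ⟨(LinearEquiv.refl K K).prodCongr ((LinearEquiv.refl K K).prodCongr g.1),
    fun x y => by
      change x.1 * y.2.1 - x.2.1 * y.1 + β (g.1 x.2.2) (g.1 y.2.2) = _
      rw [g.2, hypForm_apply]⟩
  map_one' := rfl
  map_mul' _ _ := rfl

lemma hypEmb_smul (g : Sp β) (x : K × K × W) : hypEmb β g • x = (x.1, x.2.1, g • x.2.2) := rfl

/-- The Heisenberg element `(a, b, u) ↦ (a + z b + β(x, u), b, u + b x)`. -/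
def heis (hβ : IsSymplectic β) (x : W) (z : K) : Sp (hypForm β) :=
  ⟨{ toFun := fun p => (p.1 + z * p.2.1 + β x p.2.2, p.2.1, p.2.2 + p.2.1 • x)
     invFun := fun p => (p.1 - z * p.2.1 - β x p.2.2, p.2.1, p.2.2 - p.2.1 • x)
     map_add' := fun p q => by
       ext
       · simp only [Prod.fst_add, Prod.snd_add, map_add]; ring
       · rfl
       · simp only [Prod.snd_add, Prod.fst_add]; module
     map_smul' := fun c p => by
       ext
       · simp only [Prod.smul_fst, Prod.smul_snd, map_smul, smul_eq_mul, RingHom.id_apply]; ring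
       · rfl
       · simp only [Prod.smul_fst, Prod.smul_snd, smul_eq_mul, RingHom.id_apply]; module
     left_inv := fun p => by
       ext
       · simp only [map_add, map_smul, hβ.alt, smul_eq_mul]; ring
       · rfl
       · simp
     right_inv := fun p => by
       ext
       · simp only [map_sub, map_smul, hβ.alt, smul_eq_mul]; ring
       · rfl
       · simp },
   fun p q => by
     simp only [hypForm_apply, LinearEquiv.coe_mk, LinearMap.coe_mk, AddHom.coe_mk, map_add,
       map_smul, LinearMap.add_apply, LinearMap.smul_apply, hβ.alt, hβ.neg x p.2.2, smul_eq_mul]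
     ring⟩

lemma heis_smul (hβ : IsSymplectic β) (x : W) (z : K) (p : K × K × W) :
    heis hβ x z • p = (p.1 + z * p.2.1 + β x p.2.2, p.2.1, p.2.2 + p.2.1 • x) := rfl

/-- An isometry fixing both vectors of the hyperbolic plane comes from `W`. -/
lemma exists_hypEmb (g : Sp (hypForm β)) (he : g • ((1, 0, 0) : K × K × W) = (1, 0, 0))
    (hf : g • ((0, 1, 0) : K × K × W) = (0, 1, 0)) : ∃ h : Sp β, hypEmb β h = g := by
  have hpair : ∀ k : Sp (hypForm β), k • ((1, 0, 0) : K × K × W) = (1, 0, 0) →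
      k • ((0, 1, 0) : K × K × W) = (0, 1, 0) → ∀ w : W,
      k • ((0, 0, w) : K × K × W) = (0, 0, (k • ((0, 0, w) : K × K × W)).2.2) := by
    intro k he hf w
    have h1 := Sp.form k (1, 0, 0) (0, 0, w)
    have h2 := Sp.form k (0, 1, 0) (0, 0, w)
    rw [he, hypForm_apply, hypForm_apply] at h1
    rw [hf, hypForm_apply, hypForm_apply] at h2
    simp only [map_zero, LinearMap.zero_apply, one_mul, zero_mul, mul_zero, sub_zero, zero_sub,
      add_zero, neg_eq_zero] at h1 h2
    exact Prod.ext h2 (Prod.ext h1 rfl)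
  have he' : g⁻¹ • ((1, 0, 0) : K × K × W) = (1, 0, 0) := by rw [inv_smul_eq_iff, he]
  have hf' : g⁻¹ • ((0, 1, 0) : K × K × W) = (0, 1, 0) := by rw [inv_smul_eq_iff, hf]
  refine ⟨⟨{ toFun := fun w => (g • ((0, 0, w) : K × K × W)).2.2
             invFun := fun w => (g⁻¹ • ((0, 0, w) : K × K × W)).2.2
             map_add' := fun w w' => ?_
             map_smul' := fun c w => ?_
             left_inv := fun w => ?_
             right_inv := fun w => ?_ }, fun w w' => ?_⟩, ?_⟩
  · have : ((0, 0, w + w') : K × K × W) = (0, 0, w) + (0, 0, w') := by simp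
    rw [this, smul_add]; rfl
  · have : ((0, 0, c • w) : K × K × W) = c • (0, 0, w) := by simp
    rw [this, Sp.smul_scalar]; rfl
  · beta_reduce
    rw [← hpair g he hf, inv_smul_smul]
  · beta_reduce
    rw [← hpair g⁻¹ he' hf', smul_inv_smul]
  · have h1 := Sp.form g (0, 0, w) (0, 0, w')
    rw [hpair g he hf w, hpair g he hf w', hypForm_apply, hypForm_apply] at h1
    simpa using h1
  · apply Sp.ext
    rintro ⟨a, b, w⟩
    have key : g • ((a, b, w) : K × K × W) = (a, b, (g • ((0, 0, w) : K × K × W)).2.2) := by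
      have h0 : ((a, b, w) : K × K × W) =
          a • ((1, 0, 0) : K × K × W) + b • ((0, 1, 0) : K × K × W) + (0, 0, w) := by simp
      have h1 : g • ((a, b, w) : K × K × W) =
          a • ((1, 0, 0) : K × K × W) + b • ((0, 1, 0) : K × K × W) + g • (0, 0, w) := by
        rw [h0, smul_add, smul_add, Sp.smul_scalar, Sp.smul_scalar, he, hf]
      rw [h1, hpair g he hf w]
      simp
    exact key.symm

end Hyperbolic

/-- The stabilizer of a vector of a hyperbolic plane is the semidirect product of the Heisenberg
group and the symplectic group of the orthogonal complement. -/
def stabJacobi {K : Type*} [Field K] {W : Type*} [AddCommGroup W] [Module K W]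
    {β : W →ₗ[K] W →ₗ[K] K} (hβ : IsSymplectic β) :
    Jacobi β (MulAction.stabilizer (Sp (hypForm β)) ((1, 0, 0) : K × K × W)) where
  m := (hypEmb β).codRestrict _ fun g => by
    rw [MulAction.mem_stabilizer_iff, hypEmb_smul, smul_zero]
  η x z := ⟨heis hβ x z, by rw [MulAction.mem_stabilizer_iff, heis_smul]; simp⟩
  mul x z x' z' := by
    apply Subtype.ext
    apply Sp.ext
    intro p
    change heis hβ x z • heis hβ x' z' • p = heis hβ _ _ • p
    simp only [heis_smul]
    ext
    · simp only [map_add, map_smul, LinearMap.add_apply, smul_eq_mul]; ring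
    · rfl
    · simp only; module
  conj g x z := by
    rw [mul_inv_eq_iff_eq_mul]
    apply Subtype.ext
    apply Sp.ext
    intro p
    change hypEmb β g • heis hβ x z • p = heis hβ _ _ • hypEmb β g • p
    simp only [heis_smul, hypEmb_smul]
    ext
    · simp only [Sp.form]
    · rfl
    · simp only [smul_add, Sp.smul_scalar]
  dec k := by
    have he := MulAction.mem_stabilizer_iff.1 k.2
    set q := k.1 • ((0, 1, 0) : K × K × W) with hq
    have hq1 : q.2.1 = 1 := by
      have h1 := Sp.form k.1 (1, 0, 0) (0, 1, 0)
      rw [he, ← hq, hypForm_apply, hypForm_apply] at h1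
      simpa using h1
    have hη : heis hβ q.2.2 q.1 • ((0, 1, 0) : K × K × W) = q := by
      rw [heis_smul]
      ext <;> simp [hq1]
    have hη' : heis hβ q.2.2 q.1 • ((1, 0, 0) : K × K × W) = (1, 0, 0) := by
      rw [heis_smul]
      ext <;> simp
    obtain ⟨h, hh⟩ := exists_hypEmb ((heis hβ q.2.2 q.1)⁻¹ * k.1)
      (by rw [mul_smul, he, inv_smul_eq_iff, hη'])
      (by rw [mul_smul, ← hq, inv_smul_eq_iff, hη])
    refine ⟨(q.2.2, q.1, h), Subtype.ext ?_⟩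
    change k.1 = heis hβ q.2.2 q.1 * hypEmb β h
    rw [hh, mul_inv_cancel_left]
  inj x z g x' z' g' h := by
    have h1 : ∀ p : K × K × W, heis hβ x z • hypEmb β g • p = heis hβ x' z' • hypEmb β g' • p :=
      fun p => congrArg (fun k => k.1 • p) h
    have h2 := h1 (0, 1, 0)
    simp only [heis_smul, hypEmb_smul, smul_zero, map_zero, mul_one, zero_add, add_zero, one_smul,
      Prod.mk.injEq, true_and] at h2
    refine ⟨h2.2, h2.1, Sp.ext fun w => ?_⟩
    have h3 := h1 (0, 0, w)
    simp only [heis_smul, hypEmb_smul, zero_smul, add_zero, Prod.mk.injEq] at h3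
    exact h3.2.2

theorem superPerfect_stab {K : Type u} [Field K] {W : Type u} [AddCommGroup W] [Module K W]
    {β : W →ₗ[K] W →ₗ[K] K} (hβ : IsSymplectic β)
    (h2 : (2 : K) ≠ 0) [Nontrivial W] (hSp : SuperPerfect (Sp β)) :
    SuperPerfect (MulAction.stabilizer (Sp (hypForm β)) ((1, 0, 0) : K × K × W)) :=
  (stabJacobi hβ).superPerfect hβ h2 hSp

end SymplecticStabilizer

/-! ### Central extensions of a symplectic group that split over vector stabilizers -/

namespace SymplecticStabilizer

universe u

open Subgroup

section Perfect

variable {K : Type*} [Field K] {V : Type*} [AddCommGroup V] [Module K V]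
  {B : V →ₗ[K] V →ₗ[K] K}

lemma tv_mem_stabilizer (hB : IsSymplectic B) {x u : V} (h : B x u = 0) (c : K) :
    tv hB x c ∈ MulAction.stabilizer (Sp B) u := tv_fix hB h c

/-- The symplectic group is generated by the stabilizers of nonzero vectors. -/
lemma perfect_of_stab (hB : IsSymplectic B)
    (hst : ∀ v : V, v ≠ 0 → commutator (MulAction.stabilizer (Sp B) v) = ⊤) {e : V} (he : e ≠ 0) :
    commutator (Sp B) = ⊤ := by
  have hmem : ∀ v : V, v ≠ 0 → MulAction.stabilizer (Sp B) v ≤ commutator (Sp B) :=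
    fun v hv g hg => apply_mem_commutator (hst v hv) (MulAction.stabilizer (Sp B) v).subtype ⟨g, hg⟩
  rw [eq_top_iff]
  rintro g -
  obtain ⟨h, hh, hge⟩ := exists_move hB (commutator (Sp B))
    (fun x c hx => hmem x hx (tv_mem_stabilizer hB (hB.alt x) c)) he (Sp.smul_ne_zero g he)
  have h1 : h⁻¹ * g ∈ commutator (Sp B) := hmem e he (by
    rw [MulAction.mem_stabilizer_iff, mul_smul, ← hge, inv_smul_smul])
  have := mul_mem hh h1
  rwa [mul_inv_cancel_left] at this

/-- Linear independence of a pair of vectors. -/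
def Ind (K : Type*) [Field K] {V : Type*} [AddCommGroup V] [Module K V] (x y : V) : Prop :=
  LinearIndependent K ![x, y]

lemma ind_iff {x y : V} : Ind K x y ↔ ∀ s t : K, s • x + t • y = 0 → s = 0 ∧ t = 0 :=
  LinearIndependent.pair_iff

lemma Ind.symm {x y : V} (h : Ind K x y) : Ind K y x := by
  rw [ind_iff] at h ⊢
  intro s t hst
  rw [add_comm] at hst
  exact (h t s hst).symm

lemma Ind.smul {x y : V} (h : Ind K x y) (g : Sp B) : Ind K (g • x) (g • y) := by
  rw [ind_iff] at h ⊢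
  intro s t hst
  apply h
  rw [← Sp.smul_scalar, ← Sp.smul_scalar, ← smul_add, smul_eq_zero_iff_eq] at hst
  exact hst

lemma exists_eq_of_not_ind {x y : V} (hy : y ≠ 0) (h : ¬Ind K x y) : ∃ c : K, x = c • y := by
  by_contra! h'
  exact h (pair_indep hy h')

lemma ind_of_notMem {x y z : V} (hx : x ≠ 0) (hz : z ∉ Submodule.span K {x, y}) : Ind K z x := by
  apply pair_indep hx
  rintro c rfl
  exact hz (Submodule.smul_mem _ _ (Submodule.subset_span (by simp)))

lemma ind_of_notMem' {x y z : V} (hy : y ≠ 0) (hz : z ∉ Submodule.span K {x, y}) : Ind K z y := by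
  apply ind_of_notMem (y := x) hy
  rwa [Set.pair_comm]

/-- In dimension at least three, some vector is independent of each of three given ones. -/
lemma exists_ind₃ (hdim : ∀ x y : V, ∃ z, z ∉ Submodule.span K {x, y}) {x y z : V} (hx : x ≠ 0)
    (hy : y ≠ 0) (hz : z ≠ 0) : ∃ t, Ind K t x ∧ Ind K t y ∧ Ind K t z := by
  obtain ⟨t, ht⟩ := hdim x y
  by_cases h : Ind K t z
  · exact ⟨t, ind_of_notMem hx ht, ind_of_notMem' hy ht, h⟩
  obtain ⟨c, hc⟩ := exists_eq_of_not_ind hz h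
  have hxs : x ∈ Submodule.span K {x, y} := Submodule.subset_span (by simp)
  have ht' : t + x ∉ Submodule.span K {x, y} := fun h' =>
    ht ((Submodule.add_mem_iff_left _ hxs).1 h')
  refine ⟨t + x, ind_of_notMem hx ht', ind_of_notMem' hy ht', pair_indep hz fun d hd => ?_⟩
  have h1 : x = (d - c) • z := by rw [sub_smul, ← hd, ← hc, add_sub_cancel_left]
  have h2 : d - c ≠ 0 := by
    rintro h0
    rw [h0, zero_smul] at h1
    exact hx h1
  apply ht
  have h3 : t = (c / (d - c)) • x := by rw [hc, h1, smul_smul, div_mul_cancel₀ _ h2]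
  rw [h3]
  exact Submodule.smul_mem _ _ hxs

end Perfect

/-- A central extension of the symplectic group of `B`, together with the hypotheses under which
it is shown to split: vector stabilizers are superperfect, the pointwise stabilizer of one
hyperbolic pair `e, f` is perfect, the dimension is at least three and there is a scalar `a` with
`a ≠ 0` and `a ^ 2 ≠ 1`. -/
structure GlueData {K V : Type u} [Field K] [AddCommGroup V] [Module K V]
    (B : V →ₗ[K] V →ₗ[K] K) (E : Type u) [Group E] where
  symp : IsSymplectic B
  π : E →* Sp B
  surj : Function.Surjective π
  central : π.ker ≤ center E
  stab : ∀ v : V, v ≠ 0 → SuperPerfect (MulAction.stabilizer (Sp B) v)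
  e : V
  f : V
  pair : B e f = 1
  pairPerfect : commutator
    (MulAction.stabilizer (Sp B) e ⊓ MulAction.stabilizer (Sp B) f : Subgroup (Sp B)) = ⊤
  dim : ∀ x y : V, ∃ z, z ∉ Submodule.span K {x, y}
  a : K
  a_ne : a ≠ 0
  a_sq : a ^ 2 ≠ 1

namespace GlueData

variable {K V : Type u} [Field K] [AddCommGroup V] [Module K V] {B : V →ₗ[K] V →ₗ[K] K}
  {E : Type u} [Group E] (D : GlueData B E)

/-- The canonical lift to `E` of the stabilizer of `v`: the commutator subgroup of its
preimage. -/
def T (v : V) : Subgroup E :=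
  ⁅(MulAction.stabilizer (Sp B) v).comap D.π, (MulAction.stabilizer (Sp B) v).comap D.π⁆

lemma mem_comap {v : V} {k : E} :
    k ∈ (MulAction.stabilizer (Sp B) v).comap D.π ↔ D.π k • v = v := Iff.rfl

lemma T_fix {v : V} {k : E} (hk : k ∈ D.T v) : D.π k • v = v :=
  D.mem_comap.1 (commutator_le_self _ hk)

/-- The splitting over the stabilizer of a nonzero vector has image `T v`. -/
lemma T_lift {v : V} (hv : v ≠ 0) : ∃ s : MulAction.stabilizer (Sp B) v →* E,
    (∀ g, D.π (s g) = g) ∧ ∀ k, k ∈ D.T v ↔ ∃ g, s g = k := by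
  obtain ⟨s, hs⟩ := (D.stab v hv).lift D.π D.surj D.central (MulAction.stabilizer (Sp B) v).subtype
  refine ⟨s, hs, fun k => ⟨fun hk => ?_, ?_⟩⟩
  · have h : D.T v ≤ s.range := by
      rw [T, commutator_le]
      intro k hk l hl
      rw [mem_comap] at hk hl
      have := comm_eq_of_map_eq D.π D.central (hs ⟨_, hk⟩).symm (hs ⟨_, hl⟩).symm
      exact ⟨_, (map_commutatorElement s ⟨D.π k, hk⟩ ⟨D.π l, hl⟩).trans this.symm⟩
    exact h hk
  · rintro ⟨g, rfl⟩
    have h : (commutator (MulAction.stabilizer (Sp B) v)).map s ≤ D.T v := by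
      rw [commutator_def, map_commutator, T]
      have : map s ⊤ ≤ (MulAction.stabilizer (Sp B) v).comap D.π := by
        rintro _ ⟨g, -, rfl⟩
        rw [mem_comap, hs]
        exact g.2
      exact commutator_mono this this
    exact h (mem_map_of_mem s ((D.stab v hv).perfect ▸ mem_top g))

lemma T_exists {v : V} (hv : v ≠ 0) {g : Sp B} (hg : g • v = v) : ∃ k ∈ D.T v, D.π k = g := by
  obtain ⟨s, hs, h⟩ := D.T_lift hv
  exact ⟨s ⟨g, hg⟩, (h _).2 ⟨_, rfl⟩, hs _⟩

lemma T_ker {v : V} (hv : v ≠ 0) {k : E} (hk : k ∈ D.T v) (h1 : k ∈ D.π.ker) : k = 1 := by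
  obtain ⟨s, hs, h⟩ := D.T_lift hv
  obtain ⟨g, rfl⟩ := (h _).1 hk
  rw [MonoidHom.mem_ker, hs] at h1
  rw [Subtype.ext (a1 := g) (a2 := 1) h1, map_one]

lemma T_unique {v : V} (hv : v ≠ 0) {k l : E} (hk : k ∈ D.T v) (hl : l ∈ D.T v)
    (h : D.π k = D.π l) : k = l :=
  mul_inv_eq_one.1 (D.T_ker hv (mul_mem hk (inv_mem hl)) (mem_ker_of_map_eq _ h))

lemma T_conj {v : V} {k : E} (hk : k ∈ D.T v) (l : E) : l * k * l⁻¹ ∈ D.T (D.π l • v) := by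
  have h : (D.T v).map (MulAut.conj l).toMonoidHom ≤ D.T (D.π l • v) := by
    rw [T, map_commutator, T]
    have : map (MulAut.conj l).toMonoidHom ((MulAction.stabilizer (Sp B) v).comap D.π) ≤
        (MulAction.stabilizer (Sp B) (D.π l • v)).comap D.π := by
      rintro _ ⟨g, hg, rfl⟩
      have hg' : D.π g • v = v := hg
      rw [mem_comap]
      change D.π (l * g * l⁻¹) • D.π l • v = D.π l • v
      rw [map_mul, map_mul, map_inv, mul_smul, inv_smul_smul, mul_smul, hg']
    exact commutator_mono this this
  exact h (mem_map_of_mem _ hk)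

lemma T_scale {v : V} {c : K} (hc : c ≠ 0) : D.T (c • v) = D.T v := by
  have : MulAction.stabilizer (Sp B) (c • v) = MulAction.stabilizer (Sp B) v := by
    ext g
    rw [MulAction.mem_stabilizer_iff, MulAction.mem_stabilizer_iff, Sp.smul_scalar,
      smul_right_inj hc]
  rw [T, T, this]

lemma e_ne : D.e ≠ 0 := by
  intro h
  have := D.pair
  rw [h] at this
  simp at this

lemma ne_right {v w : V} (h : B v w = 1) : w ≠ 0 := by
  rintro rfl
  simp at h

lemma ne_left {v w : V} (h : B v w = 1) : v ≠ 0 := by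
  rintro rfl
  simp at h

/-- An isometry scaling two orthogonal vectors, the first one by the scalar `a`. -/
lemma exists_scaling {x w : V} (hx : x ≠ 0) (h : B x w = 0) :
    ∃ g : Sp B, g • x = D.a • x ∧ ∃ b : K, b ≠ 0 ∧ g • w = b • w := by
  by_cases hi : Ind K x w
  · obtain ⟨y, hy, hy'⟩ := D.symp.exists_prescribed₂ hi 1 0
    obtain ⟨g, hg, hg'⟩ := exists_hyperbolic D.symp hy D.a_ne
    exact ⟨g, hg, 1, one_ne_zero, by rw [one_smul, hg' w h (by rw [D.symp.neg, hy', neg_zero])]⟩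
  · obtain ⟨c, hc⟩ := exists_eq_of_not_ind hx fun h => hi h.symm
    obtain ⟨y, hy⟩ := D.symp.exists_ne hx
    obtain ⟨g, hg, -⟩ := exists_hyperbolic D.symp (x := x) (y := (B x y)⁻¹ • y)
      (by rw [map_smul, smul_eq_mul, inv_mul_cancel₀ hy]) D.a_ne
    exact ⟨g, hg, D.a, D.a_ne, by rw [hc, Sp.smul_scalar, hg, smul_comm]⟩

/-- The lifts of a transvection along `x` provided by `x` and by a vector `w` orthogonal to `x`
agree: they differ by a homomorphism from `K` to the centre which is invariant under scaling by
`a ^ 2 ≠ 1`. -/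
lemma T_tv {x w : V} (hx : x ≠ 0) (hw : w ≠ 0) (h : B x w = 0) (c : K) {k : E} (hk : k ∈ D.T x)
    (hkc : D.π k = tv D.symp x c) : k ∈ D.T w := by
  have hX : ∀ c, ∃ k ∈ D.T x, D.π k = tv D.symp x c := fun c =>
    D.T_exists hx (tv_fix D.symp (D.symp.alt x) c)
  have hW : ∀ c, ∃ k ∈ D.T w, D.π k = tv D.symp x c := fun c =>
    D.T_exists hw (tv_fix D.symp h c)
  choose L hL hL' using hX
  choose M hM hM' using hW
  have L_add : ∀ c d, L (c + d) = L c * L d := fun c d =>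
    D.T_unique hx (hL _) (mul_mem (hL _) (hL _)) (by rw [map_mul, hL', hL', hL', tv_mul])
  have M_add : ∀ c d, M (c + d) = M c * M d := fun c d =>
    D.T_unique hw (hM _) (mul_mem (hM _) (hM _)) (by rw [map_mul, hM', hM', hM', tv_mul])
  have hcen : ∀ c, L c * (M c)⁻¹ ∈ center E := fun c =>
    D.central (mem_ker_of_map_eq _ ((hL' c).trans (hM' c).symm))
  have δ_add : ∀ c d, L (c + d) * (M (c + d))⁻¹ = L c * (M c)⁻¹ * (L d * (M d)⁻¹) := fun c d => by
    have := mem_center_iff.1 (hcen d) (L c)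
    rw [L_add, M_add, mul_inv_rev]
    calc L c * L d * ((M d)⁻¹ * (M c)⁻¹) = L c * (L d * (M d)⁻¹) * (M c)⁻¹ := by group
      _ = (L d * (M d)⁻¹) * (L c * (M c)⁻¹) := by rw [this]; group
      _ = _ := mem_center_iff.1 (hcen c) _
  obtain ⟨g, hg, b, hb, hgw⟩ := D.exists_scaling hx h
  obtain ⟨l, hl⟩ := D.surj g
  have hπ : ∀ {k : E} {c}, D.π k = tv D.symp x c →
      D.π (l * k * l⁻¹) = tv D.symp x (D.a ^ 2 * c) := fun {k c} hk => by
    rw [map_mul, map_mul, map_inv, hk, hl, tv_conj, hg, tv_scale]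
  have L_sc : ∀ c, l * L c * l⁻¹ = L (D.a ^ 2 * c) := fun c =>
    D.T_unique hx (by
      have := D.T_conj (hL c) l
      rwa [hl, hg, D.T_scale D.a_ne] at this) (hL _) ((hπ (hL' c)).trans (hL' _).symm)
  have M_sc : ∀ c, l * M c * l⁻¹ = M (D.a ^ 2 * c) := fun c =>
    D.T_unique hw (by
      have := D.T_conj (hM c) l
      rwa [hl, hgw, D.T_scale hb] at this) (hM _) ((hπ (hM' c)).trans (hM' _).symm)
  have δ_sc : ∀ c, L (D.a ^ 2 * c) * (M (D.a ^ 2 * c))⁻¹ = L c * (M c)⁻¹ := fun c => by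
    have := mem_center_iff.1 (hcen c) l
    rw [← L_sc, ← M_sc]
    calc l * L c * l⁻¹ * (l * M c * l⁻¹)⁻¹ = l * (L c * (M c)⁻¹) * l⁻¹ := by group
      _ = _ := by rw [this, mul_inv_cancel_right]
  have ha : D.a ^ 2 - 1 ≠ 0 := sub_ne_zero.2 D.a_sq
  have δ_one : L c * (M c)⁻¹ = 1 := by
    have h1 := δ_sc (c / (D.a ^ 2 - 1))
    have h2 : D.a ^ 2 * (c / (D.a ^ 2 - 1)) = c + c / (D.a ^ 2 - 1) := by
      field_simp
      ring
    rw [h2, δ_add] at h1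
    exact mul_eq_right.1 h1
  rw [D.T_unique hx hk (hL c) (hkc.trans (hL' c).symm), mul_inv_eq_one.1 δ_one]
  exact hM c

/-- The lifts provided by the two vectors of a hyperbolic pair agree on its pointwise
stabilizer. -/
lemma T_pair {v w : V} (h : B v w = 1) {k : E} (hv : D.π k • v = v) (hw : D.π k • w = w) :
    k ∈ D.T v ↔ k ∈ D.T w := by
  have base : ∀ k : E, D.π k • D.e = D.e → D.π k • D.f = D.f → (k ∈ D.T D.e ↔ k ∈ D.T D.f) := by
    intro k he hf
    obtain ⟨s, hs, hsT⟩ := D.T_lift D.e_ne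
    obtain ⟨t, ht, htT⟩ := D.T_lift (ne_right D.pair)
    have hst := lift_unique D.pairPerfect D.π D.central (s.comp (inclusion inf_le_left))
      (t.comp (inclusion inf_le_right)) (fun g => by
        rw [MonoidHom.comp_apply, MonoidHom.comp_apply, hs, ht]; rfl) ⟨D.π k, he, hf⟩
    have hst' : s ⟨D.π k, he⟩ = t ⟨D.π k, hf⟩ := hst
    constructor
    · intro hk
      rw [D.T_unique D.e_ne hk ((hsT _).2 ⟨⟨D.π k, he⟩, rfl⟩)
        (hs ⟨D.π k, he⟩).symm, hst']
      exact (htT _).2 ⟨_, rfl⟩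
    · intro hk
      rw [D.T_unique (ne_right D.pair) hk ((htT _).2 ⟨⟨D.π k, hf⟩, rfl⟩)
        (ht ⟨D.π k, hf⟩).symm, ← hst']
      exact (hsT _).2 ⟨_, rfl⟩
  obtain ⟨g, hge, hgf⟩ := exists_move_pair D.symp D.pair h
  obtain ⟨l, rfl⟩ := D.surj g
  have hb := base (l⁻¹ * k * l)
    (by rw [map_mul, map_mul, map_inv, mul_smul, hge, mul_smul, hv, ← hge, inv_smul_smul])
    (by rw [map_mul, map_mul, map_inv, mul_smul, hgf, mul_smul, hw, ← hgf, inv_smul_smul])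
  have conj_iff : ∀ u, l⁻¹ * k * l ∈ D.T u ↔ k ∈ D.T (D.π l • u) := by
    intro u
    constructor
    · intro hk
      have := D.T_conj hk l
      convert this using 1
      group
    · intro hk
      have := D.T_conj hk l⁻¹
      rwa [map_inv, inv_smul_smul, inv_inv] at this
  rw [conj_iff, conj_iff, hge, hgf] at hb
  exact hb

end GlueData

end SymplecticStabilizer

/-! ### The covering of the nonzero vectors attached to an extension -/

namespace SymplecticStabilizer

universe u

open Subgroup

namespace GlueData

variable {K V : Type u} [Field K] [AddCommGroup V] [Module K V] {B : V →ₗ[K] V →ₗ[K] K}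
  {E : Type u} [Group E] (D : GlueData B E)

/-- The homogeneous space of `E` covering the nonzero vectors of `V`; the kernel of the extension
acts simply transitively on the fibres. -/
abbrev X : Type u := E ⧸ D.T D.e

/-- The base point. -/
def o : D.X := QuotientGroup.mk 1

/-- The covering map to the nonzero vectors. -/
def p (x : D.X) : V :=
  Quotient.liftOn' x (fun k => D.π k • D.e) fun a b h => by
    have h1 := D.T_fix (QuotientGroup.leftRel_apply.1 h)
    rw [map_mul, map_inv, mul_smul, inv_smul_eq_iff] at h1
    exact h1.symm

lemma exists_smul_o (x : D.X) : ∃ k : E, k • D.o = x := by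
  obtain ⟨k, rfl⟩ := QuotientGroup.mk_surjective x
  refine ⟨k, ?_⟩
  change QuotientGroup.mk (k * 1) = _
  rw [mul_one]

lemma p_smul_o (k : E) : D.p (k • D.o) = D.π k • D.e := by
  change D.π (k * 1) • D.e = _
  rw [mul_one]

lemma p_smul (k : E) (x : D.X) : D.p (k • x) = D.π k • D.p x := by
  obtain ⟨l, rfl⟩ := D.exists_smul_o x
  rw [← mul_smul, p_smul_o, p_smul_o, map_mul, mul_smul]

lemma p_o : D.p D.o = D.e := by
  have := D.p_smul_o 1
  rwa [one_smul, map_one, one_smul] at this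

lemma p_ne (x : D.X) : D.p x ≠ 0 := by
  obtain ⟨l, rfl⟩ := D.exists_smul_o x
  rw [p_smul_o]
  exact Sp.smul_ne_zero _ D.e_ne

lemma smul_o_iff (k : E) : k • D.o = D.o ↔ k ∈ D.T D.e := by
  change (QuotientGroup.mk (k * 1) : D.X) = QuotientGroup.mk 1 ↔ _
  rw [mul_one, eq_comm, QuotientGroup.eq, inv_one, one_mul]

lemma smul_eq_iff (k : E) (x : D.X) : k • x = x ↔ k ∈ D.T (D.p x) := by
  obtain ⟨l, rfl⟩ := D.exists_smul_o x
  rw [p_smul_o, ← mul_smul, ← inv_smul_eq_iff, ← mul_smul, smul_o_iff, ← mul_assoc]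
  constructor
  · intro h
    have := D.T_conj h l
    convert this using 1
    group
  · intro h
    have := D.T_conj h l⁻¹
    rwa [map_inv, inv_smul_smul, inv_inv] at this

lemma exists_ker_smul {x y : D.X} (h : D.p x = D.p y) : ∃ a ∈ D.π.ker, a • x = y := by
  obtain ⟨l, rfl⟩ := D.exists_smul_o x
  obtain ⟨m, rfl⟩ := D.exists_smul_o y
  rw [p_smul_o, p_smul_o] at h
  obtain ⟨t, ht, ht'⟩ := D.T_exists D.e_ne (g := D.π (l⁻¹ * m)) (by
    rw [map_mul, map_inv, mul_smul, ← h, inv_smul_smul])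
  refine ⟨m * t⁻¹ * l⁻¹, ?_, ?_⟩
  · rw [MonoidHom.mem_ker, map_mul, map_mul, map_inv, ht', map_mul, map_inv]
    group
  · rw [← mul_smul, inv_mul_cancel_right, mul_smul, (D.smul_o_iff t⁻¹).2 (inv_mem ht)]

lemma eq_one_of_smul_eq {a : E} (ha : a ∈ D.π.ker) {x : D.X} (h : a • x = x) : a = 1 :=
  D.T_ker (D.p_ne x) ((D.smul_eq_iff a x).1 h) ha

lemma exists_fib {v : V} (hv : v ≠ 0) : ∃ x, D.p x = v := by
  obtain ⟨g, -, hg⟩ := exists_move D.symp ⊤ (fun _ _ _ => mem_top _) D.e_ne hv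
  obtain ⟨k, rfl⟩ := D.surj g
  exact ⟨k • D.o, by rw [p_smul_o, hg]⟩

/-- The lift of a transvection along `u` that fixes all points over the orthogonal complement
of `u`. -/
lemma exists_tv_lift {u : V} (hu : u ≠ 0) (c : K) :
    ∃ τ : E, D.π τ = tv D.symp u c ∧ ∀ y, B u (D.p y) = 0 → τ • y = y := by
  obtain ⟨τ, hτ, hτπ⟩ := D.T_exists hu (tv_fix D.symp (D.symp.alt u) c)
  exact ⟨τ, hτπ, fun y hy => (D.smul_eq_iff τ y).2 (D.T_tv hu (D.p_ne y) hy c hτ hτπ)⟩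

/-- A chosen point over the second vector of the hyperbolic pair. -/
noncomputable def o' : D.X := (D.exists_fib (ne_right D.pair)).choose

lemma p_o' : D.p D.o' = D.f := (D.exists_fib (ne_right D.pair)).choose_spec

/-- The `E`-orbit of the pair of base points: a lift of the relation `B v w = 1` to the
covering. -/
def R (x y : D.X) : Prop := ∃ k : E, k • D.o = x ∧ k • D.o' = y

variable {D}

lemma R.smul {x y : D.X} (h : D.R x y) (k : E) : D.R (k • x) (k • y) := by
  obtain ⟨l, rfl, rfl⟩ := h
  exact ⟨k * l, mul_smul _ _ _, mul_smul _ _ _⟩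

lemma R.form {x y : D.X} (h : D.R x y) : B (D.p x) (D.p y) = 1 := by
  obtain ⟨l, rfl, rfl⟩ := h
  rw [p_smul, p_smul, Sp.form, p_o, p_o', D.pair]

lemma R.exists_right (x : D.X) {w : V} (h : B (D.p x) w = 1) : ∃ y, D.p y = w ∧ D.R x y := by
  obtain ⟨g, hge, hgf⟩ := exists_move_pair D.symp D.pair h
  obtain ⟨k, rfl⟩ := D.surj g
  obtain ⟨a, ha, hax⟩ := D.exists_ker_smul (x := k • D.o) (y := x) (by rw [p_smul_o, hge])
  refine ⟨a • k • D.o', ?_, a * k, by rw [mul_smul, hax], mul_smul _ _ _⟩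
  rw [p_smul, MonoidHom.mem_ker.1 ha, one_smul, p_smul, p_o', hgf]

lemma R.exists_left (y : D.X) {v : V} (h : B v (D.p y) = 1) : ∃ x, D.p x = v ∧ D.R x y := by
  obtain ⟨g, hge, hgf⟩ := exists_move_pair D.symp D.pair h
  obtain ⟨k, rfl⟩ := D.surj g
  obtain ⟨a, ha, hay⟩ := D.exists_ker_smul (x := k • D.o') (y := y) (by rw [p_smul, p_o', hgf])
  refine ⟨a • k • D.o, ?_, a * k, mul_smul _ _ _, by rw [mul_smul, hay]⟩
  rw [p_smul, MonoidHom.mem_ker.1 ha, one_smul, p_smul, p_o, hge]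

lemma fix_iff {k : E} (he : D.π k • D.e = D.e) (hf : D.π k • D.f = D.f) :
    k • D.o = D.o ↔ k • D.o' = D.o' := by
  rw [smul_eq_iff, smul_eq_iff, p_o, p_o', D.T_pair D.pair he hf]

lemma R.unique_right {x y y' : D.X} (h : D.R x y) (h' : D.R x y') (hp : D.p y = D.p y') :
    y = y' := by
  obtain ⟨k, rfl, rfl⟩ := h
  obtain ⟨l, hl, rfl⟩ := h'
  rw [p_smul, p_smul, p_o'] at hp
  have h1 : (l⁻¹ * k) • D.o = D.o := by rw [mul_smul, ← hl, inv_smul_smul]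
  have h2 := (fix_iff (D.T_fix ((D.smul_o_iff _).1 h1))
    (by rw [map_mul, map_inv, mul_smul, hp, inv_smul_smul])).1 h1
  rwa [mul_smul, inv_smul_eq_iff] at h2

lemma R.unique_left {x x' y : D.X} (h : D.R x y) (h' : D.R x' y) (hp : D.p x = D.p x') :
    x = x' := by
  obtain ⟨k, rfl, rfl⟩ := h
  obtain ⟨l, rfl, hl⟩ := h'
  rw [p_smul, p_smul, p_o] at hp
  have h1 : (l⁻¹ * k) • D.o' = D.o' := by rw [mul_smul, ← hl, inv_smul_smul]
  have h3 := D.T_fix ((D.smul_eq_iff _ _).1 h1)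
  rw [p_o'] at h3
  have h2 := (fix_iff (by rw [map_mul, map_inv, mul_smul, hp, inv_smul_smul]) h3).2 h1
  rwa [mul_smul, inv_smul_eq_iff] at h2

lemma R.cycle₁ {x x' y y' : D.X} (h : D.R x y) (h' : D.R x' y) (h'' : D.R x y')
    (hf : B (D.p x') (D.p y') = 1) (hne : B (D.p x) (D.p x') ≠ 0) : D.R x' y' := by
  obtain ⟨τ, hτ, hfix⟩ := D.exists_tv_lift (u := D.p x' - D.p x) (by
    intro h0
    rw [sub_eq_zero.1 h0, D.symp.alt] at hne
    exact hne rfl) (-(B (D.p x) (D.p x'))⁻¹)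
  have hy : τ • y = y := hfix y (by rw [map_sub, LinearMap.sub_apply, h.form, h'.form, sub_self])
  have hy' : τ • y' = y' := hfix y' (by rw [map_sub, LinearMap.sub_apply, hf, h''.form, sub_self])
  have h1 := h.smul τ
  rw [hy] at h1
  have h2 := h1.unique_left h' (by rw [p_smul, hτ, tv_move D.symp hne])
  have h3 := h''.smul τ
  rwa [h2, hy'] at h3

lemma R.cycle₂ {x x' y y' : D.X} (h : D.R x y) (h' : D.R x' y) (h'' : D.R x y')
    (hf : B (D.p x') (D.p y') = 1) (hne : B (D.p y) (D.p y') ≠ 0) : D.R x' y' := by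
  obtain ⟨τ, hτ, hfix⟩ := D.exists_tv_lift (u := D.p y' - D.p y) (by
    intro h0
    rw [sub_eq_zero.1 h0, D.symp.alt] at hne
    exact hne rfl) (-(B (D.p y) (D.p y'))⁻¹)
  have hx : τ • x = x := hfix x (by
    rw [D.symp.neg, map_sub, h.form, h''.form, sub_self, neg_zero])
  have hx' : τ • x' = x' := hfix x' (by
    rw [D.symp.neg, map_sub, h'.form, hf, sub_self, neg_zero])
  have h1 := h.smul τ
  rw [hx] at h1
  have h2 := h1.unique_right h'' (by rw [p_smul, hτ, tv_move D.symp hne])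
  have h3 := h'.smul τ
  rwa [h2, hx'] at h3

/-- The lifted relation closes up along quadrilaterals. -/
lemma R.cycle {x x' y y' : D.X} (h : D.R x y) (h' : D.R x' y) (h'' : D.R x y')
    (hf : B (D.p x') (D.p y') = 1) : D.R x' y' := by
  by_cases h1 : B (D.p x) (D.p x') = 0
  swap
  · exact h.cycle₁ h' h'' hf h1
  by_cases h2 : B (D.p y) (D.p y') = 0
  swap
  · exact h.cycle₂ h' h'' hf h2
  have hspan : ∀ {v : V}, B v (D.p y) = 1 → v ∉ Submodule.span K {D.p y, D.p y'} := by
    intro v hv hmem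
    obtain ⟨s, t, rfl⟩ := Submodule.mem_span_pair.1 hmem
    rw [map_add, LinearMap.add_apply, map_smul, map_smul, LinearMap.smul_apply,
      LinearMap.smul_apply, D.symp.alt, D.symp.neg (D.p y) (D.p y'), h2] at hv
    simp at hv
  obtain ⟨d₁, a₁, b₁, c₁⟩ := D.symp.exists_orth (hspan h.form)
  obtain ⟨d₂, a₂, b₂, c₂⟩ := D.symp.exists_orth (hspan h'.form)
  obtain ⟨d, hd, hd', hd''⟩ := exists_ne_ne (B (D.p x)).toAddMonoidHom
    (B (D.p x')).toAddMonoidHom c₁ c₂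
  have hd : B (D.p x) d ≠ 0 := hd
  have hd' : B (D.p x') d ≠ 0 := hd'
  have hdy : B d (D.p y) = 0 := by
    rw [D.symp.neg, neg_eq_zero]
    rcases hd'' with rfl | rfl | rfl
    · exact a₁
    · exact a₂
    · rw [map_add, a₁, a₂, add_zero]
  have hdy' : B d (D.p y') = 0 := by
    rw [D.symp.neg, neg_eq_zero]
    rcases hd'' with rfl | rfl | rfl
    · exact b₁
    · exact b₂
    · rw [map_add, b₁, b₂, add_zero]
  obtain ⟨z, hz, hzy⟩ := R.exists_left (D := D) (v := D.p x + d) y (by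
    rw [map_add, LinearMap.add_apply, h.form, hdy, add_zero])
  have hzy' : D.R z y' := h.cycle₁ hzy h''
    (by rw [hz, map_add, LinearMap.add_apply, h''.form, hdy', add_zero])
    (by rw [hz, map_add, D.symp.alt, zero_add]; exact hd)
  exact hzy.cycle₁ h' hzy' hf (by
    rw [hz, map_add, LinearMap.add_apply, h1, zero_add, D.symp.neg]; exact neg_ne_zero.2 hd')

variable (D) in
/-- Two points are related if they have a common partner under `R`. -/
def Φ (x x' : D.X) : Prop := ∃ y, D.R x y ∧ D.R x' y

lemma Φ.symm {x x' : D.X} (h : D.Φ x x') : D.Φ x' x := by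
  obtain ⟨y, h1, h2⟩ := h
  exact ⟨y, h2, h1⟩

lemma Φ.smul {x x' : D.X} (h : D.Φ x x') (k : E) : D.Φ (k • x) (k • x') := by
  obtain ⟨y, h1, h2⟩ := h
  exact ⟨k • y, h1.smul k, h2.smul k⟩

lemma Φ.right {x x' y : D.X} (h : D.Φ x x') (hy : D.R x y) (hf : B (D.p x') (D.p y) = 1) :
    D.R x' y := by
  obtain ⟨z, h1, h2⟩ := h
  exact h1.cycle h2 hy hf

lemma Φ.exists (x : D.X) {v : V} (h : Ind K (D.p x) v) : ∃ x', D.p x' = v ∧ D.Φ x x' := by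
  obtain ⟨w, hw, hw'⟩ := D.symp.exists_prescribed₂ h 1 1
  obtain ⟨y, hy, hxy⟩ := R.exists_right x hw
  obtain ⟨x', hx', hxy'⟩ := R.exists_left (D := D) (v := v) y (by rw [hy, hw'])
  exact ⟨x', hx', y, hxy, hxy'⟩

lemma Φ.unique {x x' x'' : D.X} (h : D.Φ x x') (h' : D.Φ x x'') (hp : D.p x' = D.p x'') :
    x' = x'' := by
  obtain ⟨y, h1, h2⟩ := h
  exact h2.unique_left (h'.right h1 (by rw [← hp, h2.form])) hp

lemma Φ.trans_of_notMem {x y z : D.X} (h : D.Φ x y) (h' : D.Φ y z) {u v w : V}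
    (huv : Ind K u v) (hw : w ∉ Submodule.span K {u, v})
    (hx : D.p x = u ∨ D.p x = v ∨ D.p x = w) (hy : D.p y = u ∨ D.p y = v ∨ D.p y = w)
    (hz : D.p z = u ∨ D.p z = v ∨ D.p z = w) : D.Φ x z := by
  obtain ⟨t, h1, h2, h3⟩ := D.symp.exists_prescribed₃ huv hw 1 1 1
  have key : ∀ {s : D.X}, (D.p s = u ∨ D.p s = v ∨ D.p s = w) → B (D.p s) t = 1 := by
    rintro s (hs | hs | hs) <;> rwa [hs]
  obtain ⟨q, hq, hyq⟩ := R.exists_right y (key hy)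
  exact ⟨q, h.symm.right hyq (by rw [hq, key hx]), h'.right hyq (by rw [hq, key hz])⟩

/-- Transitivity of `Φ` on pairwise independent triples. -/
lemma Φ.trans {x y z : D.X} (h : D.Φ x y) (h' : D.Φ y z) (hxy : Ind K (D.p x) (D.p y))
    (hyz : Ind K (D.p y) (D.p z)) (hxz : Ind K (D.p x) (D.p z)) : D.Φ x z := by
  by_cases hm : D.p z ∈ Submodule.span K {D.p x, D.p y}
  swap
  · exact h.trans_of_notMem h' hxy hm (by simp) (by simp) (by simp)
  obtain ⟨t, ht⟩ := D.dim (D.p x) (D.p y)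
  have hle : ∀ {u v : V}, u ∈ Submodule.span K {D.p x, D.p y} →
      v ∈ Submodule.span K {D.p x, D.p y} → t ∉ Submodule.span K {u, v} := by
    intro u v hu hv hmem
    refine ht (Submodule.span_le.2 ?_ hmem)
    rintro _ (rfl | rfl)
    · exact hu
    · exact hv
  have hmx : D.p x ∈ Submodule.span K {D.p x, D.p y} := Submodule.subset_span (by simp)
  have hmy : D.p y ∈ Submodule.span K {D.p x, D.p y} := Submodule.subset_span (by simp)
  obtain ⟨q, hq, hyq⟩ := Φ.exists y (ind_of_notMem' (D.p_ne y) ht).symm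
  rw [← hq] at hle
  have hxq := h.trans_of_notMem hyq hxy (hle hmx hmy) (by simp) (by simp) (by simp)
  have hzq := h'.symm.trans_of_notMem hyq hyz (hle hmy hm) (by simp) (by simp) (by simp)
  exact hxq.trans_of_notMem hzq.symm hxz (hle hmx hm) (by simp) (by simp) (by simp)

variable (D) in
/-- Two points are related if they are `Φ`-related to a common point independent of both. -/
def Ψ (x y : D.X) : Prop :=
  ∃ z, Ind K (D.p z) (D.p x) ∧ Ind K (D.p z) (D.p y) ∧ D.Φ x z ∧ D.Φ y z

/-- The intermediate point in the definition of `Ψ` is arbitrary. -/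
lemma Ψ.any {x x' z : D.X} (h : D.Ψ x x') (hx : Ind K (D.p z) (D.p x))
    (hx' : Ind K (D.p z) (D.p x')) (hz : D.Φ x z) : D.Φ x' z := by
  have step : ∀ {z z' : D.X}, Ind K (D.p z) (D.p x) → Ind K (D.p z) (D.p x') → D.Φ x z →
      D.Φ x' z → Ind K (D.p z') (D.p x) → Ind K (D.p z') (D.p x') → D.Φ x z' →
      Ind K (D.p z) (D.p z') → D.Φ x' z' := by
    intro z z' i1 i2 f1 f2 i3 i4 f3 i5
    exact f2.trans (f1.symm.trans f3 i1 i3.symm i5) i2.symm i5 i4.symm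
  obtain ⟨q, i1, i2, f1, f2⟩ := h
  by_cases hi : Ind K (D.p z) (D.p q)
  · exact step i1 i2 f1 f2 hx hx' hz hi.symm
  obtain ⟨c, hc⟩ := exists_eq_of_not_ind (D.p_ne q) hi
  obtain ⟨t, j1, j2, j3⟩ := exists_ind₃ D.dim (D.p_ne x) (D.p_ne x') (D.p_ne q)
  obtain ⟨r, rfl, hr⟩ := Φ.exists x j1.symm
  have f3 := step i1 i2 f1 f2 j1 j2 hr j3.symm
  have j4 : Ind K (D.p r) (D.p z) := by
    apply pair_indep (D.p_ne z)
    intro d hd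
    rw [hc, smul_smul] at hd
    have := ind_iff.1 j3 1 (-(d * c)) (by rw [one_smul, neg_smul, ← hd, add_neg_cancel])
    exact one_ne_zero this.1
  exact step j1 j2 hr f3 hx hx' hz j4

lemma Ψ.symm {x x' : D.X} (h : D.Ψ x x') : D.Ψ x' x := by
  obtain ⟨z, h1, h2, h3, h4⟩ := h
  exact ⟨z, h2, h1, h4, h3⟩

lemma Ψ.smul {x x' : D.X} (h : D.Ψ x x') (k : E) : D.Ψ (k • x) (k • x') := by
  obtain ⟨z, h1, h2, h3, h4⟩ := h
  refine ⟨k • z, ?_, ?_, h3.smul k, h4.smul k⟩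
  · rw [p_smul, p_smul]; exact h1.smul _
  · rw [p_smul, p_smul]; exact h2.smul _

lemma Ψ.exists (x : D.X) {v : V} (hv : v ≠ 0) : ∃ x', D.p x' = v ∧ D.Ψ x x' := by
  obtain ⟨t, h1, h2, -⟩ := exists_ind₃ D.dim (D.p_ne x) hv hv
  obtain ⟨z, rfl, hz⟩ := Φ.exists x h1.symm
  obtain ⟨x', rfl, hx'⟩ := Φ.exists z h2
  exact ⟨x', rfl, z, h1, h2, hz, hx'.symm⟩

lemma Ψ.unique {x x' : D.X} (h : D.Ψ x x') (hp : D.p x = D.p x') : x = x' := by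
  obtain ⟨z, -, -, h3, h4⟩ := h
  exact h3.symm.unique h4.symm hp

lemma Ψ.refl (x : D.X) : D.Ψ x x := by
  obtain ⟨x', hx', h⟩ := Ψ.exists x (D.p_ne x)
  rwa [← h.unique hx'.symm] at h

lemma Ψ.trans {x y z : D.X} (h : D.Ψ x y) (h' : D.Ψ y z) : D.Ψ x z := by
  obtain ⟨t, h1, h2, h3⟩ := exists_ind₃ D.dim (D.p_ne x) (D.p_ne y) (D.p_ne z)
  obtain ⟨q, rfl, hq⟩ := Φ.exists x h1.symm
  exact ⟨q, h1, h3, hq, h'.any h2 h3 (h.any h1 h2 hq)⟩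

variable (D) in
/-- The subgroup of `E` preserving the sheet of the covering through the base point. -/
def N : Subgroup E where
  carrier := {k | D.Ψ (k • D.o) D.o}
  one_mem' := by
    rw [Set.mem_ofPred_eq, one_smul]
    exact Ψ.refl _
  mul_mem' := fun {k l} hk hl => by
    rw [Set.mem_ofPred_eq] at *
    rw [mul_smul]
    exact (hl.smul k).trans hk
  inv_mem' := fun {k} hk => by
    rw [Set.mem_ofPred_eq] at *
    have := hk.smul k⁻¹
    rw [inv_smul_smul] at this
    exact this.symm

variable (D) in
/-- The extension splits: `N` is a complement of the kernel. -/
theorem exists_section : ∃ s : Sp B →* E, ∀ g, D.π (s g) = g := by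
  have hbij : Function.Bijective (D.π.comp D.N.subtype) := by
    constructor
    · rw [injective_iff_map_eq_one]
      rintro ⟨k, hk⟩ h
      have hker : k ∈ D.π.ker := h
      have hk' : D.Ψ (k • D.o) D.o := hk
      apply Subtype.ext
      exact D.eq_one_of_smul_eq hker (hk'.unique (by
        rw [p_smul, MonoidHom.mem_ker.1 hker, one_smul]))
    · intro g
      obtain ⟨x, hx, hΨ⟩ := Ψ.exists D.o (Sp.smul_ne_zero g D.e_ne)
      obtain ⟨k, rfl⟩ := D.surj g
      obtain ⟨a, ha, hax⟩ := D.exists_ker_smul (x := k • D.o) (y := x) (by rw [p_smul_o, hx])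
      refine ⟨⟨a * k, ?_⟩, ?_⟩
      · change D.Ψ ((a * k) • D.o) D.o
        rw [mul_smul, hax]
        exact hΨ.symm
      · change D.π (a * k) = D.π k
        rw [map_mul, MonoidHom.mem_ker.1 ha, one_mul]
  let φ := MulEquiv.ofBijective _ hbij
  exact ⟨D.N.subtype.comp φ.symm.toMonoidHom, fun g => φ.apply_symm_apply g⟩

end GlueData

/-- If vector stabilizers are superperfect and the pointwise stabilizer of a hyperbolic pair is
perfect, then the symplectic group is superperfect, provided that the dimension is at least three
and some scalar has `a ^ 2 ≠ 0, 1`. -/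
theorem superPerfect_Sp {K V : Type u} [Field K] [AddCommGroup V] [Module K V]
    {B : V →ₗ[K] V →ₗ[K] K} (hB : IsSymplectic B)
    (hst : ∀ v : V, v ≠ 0 → SuperPerfect (MulAction.stabilizer (Sp B) v)) {e f : V}
    (hef : B e f = 1) (hp : commutator
      (MulAction.stabilizer (Sp B) e ⊓ MulAction.stabilizer (Sp B) f : Subgroup (Sp B)) = ⊤)
    (hdim : ∀ x y : V, ∃ z, z ∉ Submodule.span K {x, y}) {a : K} (ha : a ≠ 0) (ha2 : a ^ 2 ≠ 1) :
    SuperPerfect (Sp B) where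
  perfect := perfect_of_stab hB (fun v hv => (hst v hv).perfect) (GlueData.ne_left hef)
  split _ _ π hs hc :=
    GlueData.exists_section
      { symp := hB, π := π, surj := hs, central := hc, stab := hst, e := e, f := f, pair := hef,
        pairPerfect := hp, dim := hdim, a := a, a_ne := ha, a_sq := ha2 }

end SymplecticStabilizer

/-! ### Transport along isometries, and the induction on the rank -/

namespace SymplecticStabilizer

universe u

open Subgroup

/-- An isomorphism of groups matching two point stabilizers restricts to them. -/
lemma superPerfect_stabilizer_of_mulEquiv {G H X Y : Type u} [Group G] [Group H] [MulAction G X]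
    [MulAction H Y] (e : G ≃* H) {x : X} {y : Y} (h : ∀ g, e g • y = y ↔ g • x = x)
    (hx : SuperPerfect (MulAction.stabilizer G x)) : SuperPerfect (MulAction.stabilizer H y) := by
  refine hx.of_mulEquiv ((e.subgroupMap _).trans (MulEquiv.subgroupCongr ?_))
  ext k
  constructor
  · rintro ⟨g, hg, rfl⟩
    exact (h g).2 hg
  · intro hk
    refine ⟨e.symm k, (h _).1 ?_, e.apply_symm_apply k⟩
    rw [e.apply_symm_apply]
    exact hk

section Transport

variable {K : Type*} [Field K] {V V' : Type*} [AddCommGroup V] [Module K V]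
  [AddCommGroup V'] [Module K V'] {B : V →ₗ[K] V →ₗ[K] K} {B' : V' →ₗ[K] V' →ₗ[K] K}

/-- An isometry induces an isomorphism of isometry groups. -/
def spCongr (φ : V ≃ₗ[K] V') (hφ : ∀ x y, B' (φ x) (φ y) = B x y) : Sp B ≃* Sp B' where
  toFun g := ⟨(φ.symm.trans g.1).trans φ, fun x y => by
    change B' (φ (g • φ.symm x)) (φ (g • φ.symm y)) = _
    rw [hφ, Sp.form, ← hφ, φ.apply_symm_apply, φ.apply_symm_apply]⟩
  invFun g := ⟨(φ.trans g.1).trans φ.symm, fun x y => by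
    change B (φ.symm (g • φ x)) (φ.symm (g • φ y)) = _
    rw [← hφ, φ.apply_symm_apply, φ.apply_symm_apply, Sp.form, hφ]⟩
  left_inv g := by
    apply Sp.ext
    intro x
    change φ.symm (φ (g • φ.symm (φ x))) = _
    rw [φ.symm_apply_apply, φ.symm_apply_apply]
  right_inv g := by
    apply Sp.ext
    intro x
    change φ (φ.symm (g • φ (φ.symm x))) = _
    rw [φ.apply_symm_apply, φ.apply_symm_apply]
  map_mul' g h := by
    apply Sp.ext
    intro x
    change φ (g • h • φ.symm x) = φ (g • φ.symm (φ (h • φ.symm x)))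
    rw [φ.symm_apply_apply]

lemma spCongr_smul (φ : V ≃ₗ[K] V') (hφ : ∀ x y, B' (φ x) (φ y) = B x y) (g : Sp B) (x : V) :
    spCongr φ hφ g • φ x = φ (g • x) := by
  change φ (g • φ.symm (φ x)) = _
  rw [φ.symm_apply_apply]

lemma IsSymplectic.of_isometry (hB' : IsSymplectic B') (φ : V ≃ₗ[K] V')
    (hφ : ∀ x y, B' (φ x) (φ y) = B x y) : IsSymplectic B where
  alt x := by rw [← hφ, hB'.alt]
  nondeg x h := by
    rw [← φ.map_eq_zero_iff]
    apply hB'.nondeg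
    intro y
    rw [← φ.apply_symm_apply y, hφ, h]

end Transport

section Step

variable {K W : Type u} [Field K] [AddCommGroup W] [Module K W] {β : W →ₗ[K] W →ₗ[K] K}

/-- All nonzero vectors are conjugate, so all their stabilizers are superperfect. -/
lemma superPerfect_stab_hyp (hβ : IsSymplectic β) (h2 : (2 : K) ≠ 0) [Nontrivial W]
    (hSp : SuperPerfect (Sp β)) {v : K × K × W} (hv : v ≠ 0) :
    SuperPerfect (MulAction.stabilizer (Sp (hypForm β)) v) := by
  obtain ⟨g, -, hg⟩ := exists_move (hypForm_isSymplectic hβ) ⊤ (fun _ _ _ => mem_top _)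
    (v := ((1, 0, 0) : K × K × W)) (by simp) hv
  refine superPerfect_stabilizer_of_mulEquiv (MulAut.conj g) (fun k => ?_)
    (superPerfect_stab hβ h2 hSp)
  rw [MulAut.conj_apply, ← hg, mul_smul, mul_smul, inv_smul_smul, smul_left_cancel_iff]

lemma superPerfect_hyp [FiniteDimensional K W] (hβ : IsSymplectic β) (h2 : (2 : K) ≠ 0)
    [Nontrivial W] (hSp : SuperPerfect (Sp β)) {a : K} (ha : a ≠ 0) (ha2 : a ^ 2 ≠ 1) :
    SuperPerfect (Sp (hypForm β)) := by
  refine superPerfect_Sp (hypForm_isSymplectic hβ)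
    (fun v hv => superPerfect_stab_hyp hβ h2 hSp hv) (e := (1, 0, 0)) (f := (0, 1, 0))
    (by simp [hypForm_apply]) ?_ ?_ ha ha2
  · -- the stabilizer of the hyperbolic pair is the image of `Sp β`
    refine commutator_eq_top_of_surjective hSp.perfect ((hypEmb β).codRestrict
      (MulAction.stabilizer (Sp (hypForm β)) ((1, 0, 0) : K × K × W) ⊓
        MulAction.stabilizer (Sp (hypForm β)) ((0, 1, 0) : K × K × W)) fun g => ⟨?_, ?_⟩) ?_
    · change hypEmb β g • ((1, 0, 0) : K × K × W) = (1, 0, 0)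
      rw [hypEmb_smul, smul_zero]
    · change hypEmb β g • ((0, 1, 0) : K × K × W) = (0, 1, 0)
      rw [hypEmb_smul, smul_zero]
    · rintro ⟨g, he, hf⟩
      obtain ⟨h, hh⟩ := exists_hypEmb g he hf
      exact ⟨h, Subtype.ext hh⟩
  · intro x y
    by_contra! h
    have htop : Submodule.span K {x, y} = ⊤ := eq_top_iff.2 fun z _ => h z
    have h2 := finrank_range_le_card (R := K) ![x, y]
    have h3 : 0 < Module.finrank K W := Module.finrank_pos
    rw [Set.finrank, Matrix.range_cons_cons_empty, htop, finrank_top, Module.finrank_prod,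
      Module.finrank_prod, Module.finrank_self, Fintype.card_fin] at h2
    omega

end Step

section Standard

open Matrix

/-- The standard symplectic form on `K²ⁿ`, with Gram matrix `Matrix.J`. -/
noncomputable def std (K : Type*) [Field K] (n : ℕ) :
    (Fin n ⊕ Fin n → K) →ₗ[K] (Fin n ⊕ Fin n → K) →ₗ[K] K :=
  Matrix.toLinearMap₂' K (Matrix.J (Fin n) K)

variable {K : Type*} [Field K]

lemma std_apply {n : ℕ} (x y : Fin n ⊕ Fin n → K) :
    std K n x y = ∑ i, (x (Sum.inr i) * y (Sum.inl i) - x (Sum.inl i) * y (Sum.inr i)) := by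
  rw [std, Matrix.toLinearMap₂'_apply', Matrix.J, Matrix.fromBlocks_mulVec]
  simp [dotProduct, Fintype.sum_sum_type, Finset.sum_add_distrib, sub_eq_add_neg, add_comm,
    Matrix.neg_mulVec]

/-- Splitting off the first hyperbolic plane of the standard symplectic space. -/
def splitStd (K : Type*) [Field K] (n : ℕ) :
    (Fin (n + 1) ⊕ Fin (n + 1) → K) ≃ₗ[K] K × K × (Fin n ⊕ Fin n → K) where
  toFun x := (x (Sum.inr 0), x (Sum.inl 0),
    Sum.elim (fun i => x (Sum.inl i.succ)) (fun i => x (Sum.inr i.succ)))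
  invFun p := Sum.elim (Fin.cons p.2.1 fun i => p.2.2 (Sum.inl i))
    (Fin.cons p.1 fun i => p.2.2 (Sum.inr i))
  map_add' x y := by
    refine Prod.ext rfl (Prod.ext rfl ?_)
    ext (i | i) <;> rfl
  map_smul' c x := by
    refine Prod.ext rfl (Prod.ext rfl ?_)
    ext (i | i) <;> rfl
  left_inv x := by
    ext (i | i) <;> refine Fin.cases rfl (fun i => rfl) i
  right_inv p := by
    refine Prod.ext rfl (Prod.ext rfl ?_)
    ext (i | i) <;> rfl

lemma splitStd_form (n : ℕ) (x y : Fin (n + 1) ⊕ Fin (n + 1) → K) :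
    hypForm (std K n) (splitStd K n x) (splitStd K n y) = std K (n + 1) x y := by
  rw [hypForm_apply, std_apply, std_apply, Fin.sum_univ_succ]
  rfl

lemma std_isSymplectic (n : ℕ) : IsSymplectic (std K n) := by
  induction n with
  | zero => exact ⟨fun x => by simp [std_apply], fun x _ => Subsingleton.elim _ _⟩
  | succ n ih => exact (hypForm_isSymplectic ih).of_isometry _ (splitStd_form n)

/-- The standard symplectic form of the plane. -/
noncomputable def planeForm (K : Type*) [Field K] : (Fin 2 → K) →ₗ[K] (Fin 2 → K) →ₗ[K] K :=
  Matrix.toLinearMap₂' K !![(0 : K), -1; 1, 0]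

lemma planeForm_apply (x y : Fin 2 → K) : planeForm K x y = x 1 * y 0 - x 0 * y 1 := by
  simp [planeForm, Matrix.toLinearMap₂'_apply', Matrix.mulVec, dotProduct, Fin.sum_univ_two]
  ring

lemma planeForm_mulVec (A : Matrix (Fin 2) (Fin 2) K) (x y : Fin 2 → K) :
    planeForm K (A *ᵥ x) (A *ᵥ y) = A.det * planeForm K x y := by
  simp only [planeForm_apply, Matrix.mulVec, dotProduct, Fin.sum_univ_two, Matrix.det_fin_two]
  ring

/-- `SL₂` acts on the plane by isometries. -/
noncomputable def slHom (K : Type*) [Field K] :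
    Matrix.SpecialLinearGroup (Fin 2) K →* Sp (planeForm K) :=
  (Matrix.SpecialLinearGroup.toLin' (n := Fin 2) (R := K)).codRestrict _ fun g x y => by
    change planeForm K (g.1 *ᵥ x) (g.1 *ᵥ y) = _
    rw [planeForm_mulVec, g.2, one_mul]

lemma slHom_bijective : Function.Bijective (slHom K) := by
  constructor
  · intro g h hgh
    apply Subtype.ext
    apply Matrix.mulVec_injective
    funext x
    exact congrArg (fun k : Sp (planeForm K) => k • x) hgh
  · intro g
    have hg : ∀ x, LinearMap.toMatrix' g.1.toLinearMap *ᵥ x = g • x := fun x => by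
      rw [LinearMap.toMatrix'_mulVec]; rfl
    refine ⟨⟨LinearMap.toMatrix' g.1.toLinearMap, ?_⟩, ?_⟩
    · have h := planeForm_mulVec (LinearMap.toMatrix' g.1.toLinearMap) ![0, 1] ![1, 0]
      rw [hg, hg, Sp.form] at h
      simpa [planeForm_apply] using h.symm
    · exact Sp.ext hg

/-- The plane in the two coordinate systems in use. -/
def planeEquiv (K : Type*) [Field K] : (Fin 2 → K) ≃ₗ[K] (Fin 1 ⊕ Fin 1 → K) where
  toFun x := Sum.elim (fun _ => x 0) (fun _ => x 1)
  invFun y := ![y (Sum.inl 0), y (Sum.inr 0)]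
  map_add' x y := by ext (i | i) <;> rfl
  map_smul' c x := by ext (i | i) <;> rfl
  left_inv x := by ext i; fin_cases i <;> rfl
  right_inv y := by ext (i | i) <;> fin_cases i <;> rfl

lemma planeEquiv_form (x y : Fin 2 → K) :
    std K 1 (planeEquiv K x) (planeEquiv K y) = planeForm K x y := by
  rw [std_apply, planeForm_apply, Fin.sum_univ_one]
  rfl

end Standard

section Main

variable {K : Type u} [Field K] [Fintype K]

lemma two_ne_zero_of_odd (hodd : Odd (Fintype.card K)) : (2 : K) ≠ 0 := by
  intro h
  have h1 : ringChar K = 2 := CharP.ringChar_of_prime_eq_zero Nat.prime_two (by exact_mod_cast h)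
  have h2 := (FiniteField.even_card_iff_char_two).1 h1
  exact (Nat.not_even_iff_odd.2 hodd) (Nat.even_iff.2 h2)

/-- By induction on the rank, starting from `Sp₂ = SL₂`. -/
lemma superPerfect_std (hodd : Odd (Fintype.card K)) (h3 : Fintype.card K ≠ 3)
    (h9 : Fintype.card K ≠ 9) (n : ℕ) : SuperPerfect (Sp (std K (n + 1))) := by
  induction n with
  | zero =>
    exact (superPerfect_SL2 hodd h3 h9).of_mulEquiv
      ((MulEquiv.ofBijective _ slHom_bijective).trans (spCongr _ planeEquiv_form))
  | succ n ih =>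
    have hq : 3 < Fintype.card K := by
      have := Fintype.one_lt_card (α := K)
      obtain ⟨k, hk⟩ := hodd
      omega
    obtain ⟨a, ha, ha2⟩ := exists_sq_ne_one hq
    exact (superPerfect_hyp (std_isSymplectic (n + 1)) (two_ne_zero_of_odd hodd) ih ha
      ha2).of_mulEquiv (spCongr _ (splitStd_form (n + 1))).symm

lemma superPerfect_std_stab (hodd : Odd (Fintype.card K)) (h3 : Fintype.card K ≠ 3)
    (h9 : Fintype.card K ≠ 9) (n : ℕ) {v : Fin (n + 2) ⊕ Fin (n + 2) → K} (hv : v ≠ 0) :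
    SuperPerfect (MulAction.stabilizer (Sp (std K (n + 2))) v) := by
  refine superPerfect_stabilizer_of_mulEquiv (spCongr _ (splitStd_form (n + 1))).symm
    (fun g => ?_) (superPerfect_stab_hyp (std_isSymplectic (n + 1)) (two_ne_zero_of_odd hodd)
      (superPerfect_std hodd h3 h9 n) (v := splitStd K (n + 1) v)
      ((splitStd K (n + 1)).map_ne_zero_iff.2 hv))
  obtain ⟨k, rfl⟩ := (spCongr _ (splitStd_form (n + 1))).surjective g
  rw [MulEquiv.symm_apply_apply, spCongr_smul, (splitStd K (n + 1)).injective.eq_iff]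

end Main

section Matrices

open Matrix

variable {K : Type*} [Field K] {n : ℕ}

lemma std_mulVec (A : Matrix (Fin n ⊕ Fin n) (Fin n ⊕ Fin n) K) (x y : Fin n ⊕ Fin n → K) :
    std K n (A *ᵥ x) (A *ᵥ y) = Matrix.toLinearMap₂' K (Aᵀ * Matrix.J (Fin n) K * A) x y := by
  rw [std, Matrix.toLinearMap₂'_apply', Matrix.toLinearMap₂'_apply', Matrix.mulVec_mulVec,
    Matrix.mul_assoc, ← Matrix.mulVec_mulVec _ Aᵀ, Matrix.dotProduct_mulVec x Aᵀ,
    Matrix.vecMul_transpose]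

lemma mem_symplectic_iff (A : Matrix (Fin n ⊕ Fin n) (Fin n ⊕ Fin n) K) :
    A ∈ Matrix.symplecticGroup (Fin n) K ↔
      ∀ x y, std K n (A *ᵥ x) (A *ᵥ y) = std K n x y := by
  rw [SymplecticGroup.mem_iff']
  simp only [std_mulVec]
  exact ⟨fun h x y => by rw [h]; rfl,
    fun h => (Matrix.toLinearMap₂' K).injective (LinearMap.ext₂ h)⟩

/-- The symplectic matrix of an isometry of the standard form, for isometries fixing `v`. -/
noncomputable def matHom (v : Fin n ⊕ Fin n → K) :
    MulAction.stabilizer (Sp (std K n)) v →* vecStabilizer K n v where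
  toFun g := ⟨⟨LinearMap.toMatrix' g.1.1.toLinearMap, (mem_symplectic_iff _).2 fun x y => by
      rw [LinearMap.toMatrix'_mulVec, LinearMap.toMatrix'_mulVec]
      exact g.1.2 x y⟩, by
    change LinearMap.toMatrix' g.1.1.toLinearMap *ᵥ v = v
    rw [LinearMap.toMatrix'_mulVec]
    exact g.2⟩
  map_one' := Subtype.ext (Subtype.ext LinearMap.toMatrix'_id)
  map_mul' g h := Subtype.ext (Subtype.ext (LinearMap.toMatrix'_comp _ _))

lemma matHom_bijective (v : Fin n ⊕ Fin n → K) : Function.Bijective (matHom v) := by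
  constructor
  · intro g h hgh
    apply Subtype.ext
    apply Subtype.ext
    apply LinearEquiv.toLinearMap_injective
    apply LinearMap.toMatrix'.injective
    exact congrArg (fun k : vecStabilizer K n v => k.1.1) hgh
  · intro A
    have h1 : A.1.1 * (A.1⁻¹).1 = 1 := congrArg Subtype.val (mul_inv_cancel A.1)
    have h2 : (A.1⁻¹).1 * A.1.1 = 1 := congrArg Subtype.val (inv_mul_cancel A.1)
    refine ⟨⟨⟨Matrix.toLin'OfInv h2 h1, ?_⟩, ?_⟩, ?_⟩
    · exact (mem_symplectic_iff A.1.1).1 A.1.2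
    · exact A.2
    · exact Subtype.ext (Subtype.ext (LinearMap.toMatrix'_toLin' A.1.1))

end Matrices

end SymplecticStabilizer

/-- Let `n ≥ 2` and let `q` be an odd prime power with `q ≠ 3, 9`.  For the
stabilizer `G ≤ Sp(2n; 𝔽_q)` of a fixed nonzero vector, the first and second group homology
with trivial `ℤ`-coefficients vanish. -/
theorem symplectic_stabilizer_H1_H2_vanish (q : ℕ) (hq : IsPrimePow q) (hodd : Odd q)
    (hq3 : q ≠ 3) (hq9 : q ≠ 9)
    (K : Type*) [Field K] [Fintype K] (hcard : Fintype.card K = q)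
    (n : ℕ) (hn : 2 ≤ n) (v : (Fin n ⊕ Fin n) → K) (hv : v ≠ 0) :
    Subsingleton (Abelianization (vecStabilizer K n v)) ∧
      Subsingleton (BarHomology.H2 (vecStabilizer K n v)) := by
  subst hcard
  obtain ⟨m, rfl⟩ := Nat.exists_eq_add_of_le' hn
  have h : SymplecticStabilizer.SuperPerfect (vecStabilizer K (m + 2) v) :=
    (SymplecticStabilizer.superPerfect_std_stab hodd hq3 hq9 m hv).of_mulEquiv
      (MulEquiv.ofBijective _ (SymplecticStabilizer.matHom_bijective v))
  exact ⟨SymplecticStabilizer.subsingleton_abelianization h.perfect, h.subsingleton_H2⟩
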